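/- arXiv:2003.02714 — 3 statements merged into one kernel-verified Lean document; each statement's English description precedes it below -/
import Mathlib

section
/- For every normal PO-dilator W and every partial order X there exists a Kruskal fixed point (Z, ι, κ) of W over X that satisfies condition (i). -/
universe u

/-- A bundled partial order. -/
structure POrd : Type (u + 1) where
  carrier : Type u
  [str : PartialOrder carrier]

instance : CoeSort POrd.{u} (Type u) := ⟨POrd.carrier⟩
attribute [instance] POrd.str

def POrd.of (X : Type u) [PartialOrder X] : POrd.{u} := ⟨X⟩

/-- A quasi embedding of partial orders. -/
def QuasiEmb {X Y : Type*} [PartialOrder X] [PartialOrder Y] (f : X → Y) : Prop :=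
  ∀ x y : X, f x ≤ f y → x ≤ y

/-- An embedding of partial orders. -/
def IsEmb {X Y : Type*} [PartialOrder X] [PartialOrder Y] (f : X → Y) : Prop :=
  ∀ x y : X, x ≤ y ↔ f x ≤ f y

theorem quasiEmb_id {X : Type*} [PartialOrder X] : QuasiEmb (id : X → X) :=
  fun _ _ h => h

theorem QuasiEmb.comp {X Y Z : Type*} [PartialOrder X] [PartialOrder Y] [PartialOrder Z]
    {f : X → Y} {g : Y → Z} (hf : QuasiEmb f) (hg : QuasiEmb g) :
    QuasiEmb (g ∘ f) := fun x y h => hf x y (hg _ _ h)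

/-- `LeFin a b` is the relation `a ≤ᶠⁱⁿ b` on subsets of a partial order. -/
def LeFin {X : Type*} [PartialOrder X] (a b : Set X) : Prop :=
  ∀ x ∈ a, ∃ y ∈ b, x ≤ y

/-- A PO-dilator: an embedding-preserving functor on partial orders with quasi embeddings,
together with a natural finite support. -/
structure PODilator : Type (u + 1) where
  obj : POrd.{u} → POrd.{u}
  map : {X Y : POrd.{u}} → (f : X → Y) → QuasiEmb f → (obj X → obj Y)
  supp : {X : POrd.{u}} → obj X → Set X
  map_quasiEmb : ∀ {X Y : POrd.{u}} (f : X → Y) (hf : QuasiEmb f), QuasiEmb (map f hf)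
  map_id : ∀ (X : POrd.{u}), map (id : X → X) quasiEmb_id = id
  map_comp : ∀ {X Y Z : POrd.{u}} (f : X → Y) (g : Y → Z) (hf : QuasiEmb f) (hg : QuasiEmb g),
      map (g ∘ f) (hf.comp hg) = map g hg ∘ map f hf
  map_emb : ∀ {X Y : POrd.{u}} (f : X → Y) (hf : QuasiEmb f), IsEmb f → IsEmb (map f hf)
  supp_finite : ∀ {X : POrd.{u}} (σ : obj X), (supp σ).Finite
  supp_natural : ∀ {X Y : POrd.{u}} (f : X → Y) (hf : QuasiEmb f) (σ : obj X),
      supp (map f hf σ) = f '' supp σ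
  supp_cond : ∀ {X Y : POrd.{u}} (f : X → Y) (hf : QuasiEmb f), IsEmb f →
      ∀ σ : obj Y, supp σ ⊆ Set.range f → σ ∈ Set.range (map f hf)

/-- Normality of a PO-dilator. -/
def PODilator.IsNormal (W : PODilator.{u}) : Prop :=
  ∀ (X : POrd.{u}) (σ τ : W.obj X), σ ≤ τ → LeFin (W.supp σ) (W.supp τ)

/-- Well partial orders. -/
def IsWpo (X : Type*) [PartialOrder X] : Prop :=
  ∀ f : ℕ → X, ∃ i j : ℕ, i < j ∧ f i ≤ f j

/-- A WPO-dilator preserves well partial orders. -/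
def PODilator.IsWPO (W : PODilator.{u}) : Prop :=
  ∀ X : POrd.{u}, IsWpo X → IsWpo (W.obj X)

/-- Kruskal fixed point of `W` over `X`. -/
structure IsKruskalFP (W : PODilator.{u}) (X Z : POrd.{u})
    (ι : X → Z) (κ : W.obj Z → Z) : Prop where
  range_disjoint : Set.range ι ∩ Set.range κ = ∅
  iota_le : ∀ x y : X, ι x ≤ ι y → x ≤ y
  iota_kappa : ∀ (x : X) (τ : W.obj Z), ι x ≤ κ τ ↔ ∃ z ∈ W.supp τ, ι x ≤ z
  kappa_iota : ∀ (σ : W.obj Z) (y : X), ¬ κ σ ≤ ι y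
  kappa_kappa : ∀ σ τ : W.obj Z, κ σ ≤ κ τ ↔ (σ ≤ τ ∨ ∃ z ∈ W.supp τ, κ σ ≤ z)

/-- Condition (i) of Theorem 3.5. -/
structure KFPCondI (W : PODilator.{u}) (X Z : POrd.{u})
    (ι : X → Z) (κ : W.obj Z → Z) : Prop where
  range_union : Set.range ι ∪ Set.range κ = Set.univ
  iota_mono : ∀ x y : X, x ≤ y → ι x ≤ ι y
  height : ∃ h : Z → ℕ, ∀ (s : Z) (σ : W.obj Z), s ∈ W.supp σ → h s < h (κ σ)

/-- Initial Kruskal fixed points. -/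
def IsInitialKFP (W : PODilator.{u}) (X Z : POrd.{u})
    (ι : X → Z) (κ : W.obj Z → Z) : Prop :=
  IsKruskalFP W X Z ι κ ∧
  ∀ (Z' : POrd.{u}) (ι' : X → Z') (κ' : W.obj Z' → Z'), IsKruskalFP W X Z' ι' κ' →
    ∃! f : Z → Z', ∃ hf : QuasiEmb f, f ∘ ι = ι' ∧ f ∘ κ = κ' ∘ W.map f hf

/-!
A Kruskal fixed point of `W` over `X` is one of the dilator `V Y = X ⊕ W Y` over the empty order,
so the parameter `X` can be absorbed. What remains is a term construction: an order `Z` with a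
bijection `V Z ≃ Z` such that `s ≤ t` holds iff the terms satisfy it in `V Z` or `s` lies below an
immediate subterm of `t`.

Suppose that `A` approximates `Z` in the sense that every element of `A` is a term over `A`, but not
every term over `A` need be an element. The terms over `A` then form the next approximation: to
compare them one has to know when a term `σ` lies below an element `z` of `A`, and this is so iff
`σ ≤ y` in `V A` for some `y ≤ z`. Normality makes this an order extending `A`. Starting with the
empty order and taking the union, every term over the union is an element of it, because supports
are finite. An element first reached at stage `n + 1` has its immediate subterms in stage `n`, which
gives the height function.
-/

section OrderDirectLimit

open DirectLimit DirectedSystem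

variable {ι : Type*} [Preorder ι] [IsDirectedOrder ι] {G : ι → Type*} [∀ i, PartialOrder (G i)]
  (f : ∀ i j, i ≤ j → G i ↪o G j) [DirectedSystem G (f · · ·)]

theorem directLimit_mk_le_mk_iff {x y : Σ i, G i} :
    (⟦x⟧ : DirectLimit G f) ≤ ⟦y⟧ ↔
      ∃ (k : ι) (hx : x.1 ≤ k) (hy : y.1 ≤ k), f x.1 k hx x.2 ≤ f y.1 k hy y.2 := by
  have le_of_step {x y : Σ i, G i} (h : x ≤ y ∨ setoid f x y) :
      ∃ (k : ι) (hx : x.1 ≤ k) (hy : y.1 ≤ k), f x.1 k hx x.2 ≤ f y.1 k hy y.2 := by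
    obtain ⟨i, _, _, h⟩ | ⟨k, hx, hy, h⟩ := h
    · exact ⟨i, le_rfl, le_rfl, (f i i le_rfl).monotone h⟩
    · exact ⟨k, hx, hy, h.le⟩
  constructor
  · intro h
    replace h := Quotient.le_def.1 h
    induction h with
    | single h => exact le_of_step h
    | tail _ hyz ih =>
      obtain ⟨k, hx, hy, hxy⟩ := ih
      obtain ⟨l, hy', hz, hyz⟩ := le_of_step hyz
      obtain ⟨m, hkm, hlm⟩ := exists_ge_ge k l
      refine ⟨m, hx.trans hkm, hz.trans hlm, ?_⟩
      rw [← map_map' f hx hkm, ← map_map' f hz hlm]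
      refine ((f k m hkm).monotone hxy).trans (le_of_eq_of_le ?_ ((f l m hlm).monotone hyz))
      rw [map_map', map_map']
  · rintro ⟨k, hx, hy, h⟩
    rw [eq_of_le x k hx, eq_of_le y k hy]
    exact Quotient.mk_monotone (Sigma.le_def.2 ⟨rfl, h⟩)

theorem directLimit_mk_le_mk {i : ι} {x y : G i} :
    (⟦⟨i, x⟩⟧ : DirectLimit G f) ≤ ⟦⟨i, y⟩⟧ ↔ x ≤ y :=
  (directLimit_mk_le_mk_iff f).trans
    ⟨fun ⟨k, hx, _, h⟩ => (f i k hx).le_iff_le.1 h,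
      fun h => ⟨i, le_rfl, le_rfl, (f i i le_rfl).monotone h⟩⟩

-- `DirectLimit` already carries the preorder generated by `Sigma.LE` on representatives, so only
-- antisymmetry is left to prove.
instance directLimitPartialOrder : PartialOrder (DirectLimit G f) where
  le_antisymm u v huv hvu := by
    induction u, v using DirectLimit.induction₂ with
    | _ i x y =>
      rw [directLimit_mk_le_mk] at huv hvu
      rw [huv.antisymm hvu]

/-- The canonical map from a member of a directed system of partial orders and order embeddings
to the direct limit. -/
def directLimitOf (i : ι) : G i ↪o DirectLimit G f :=
  OrderEmbedding.ofMapLEIff (fun x => ⟦⟨i, x⟩⟧) fun _ _ => directLimit_mk_le_mk f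

theorem directLimitOf_map {i j : ι} (h : i ≤ j) (x : G i) :
    directLimitOf f j (f i j h x) = directLimitOf f i x :=
  mk_apply i j x h

theorem trans_directLimitOf {i j : ι} (h : i ≤ j) :
    (f i j h).trans (directLimitOf f j) = directLimitOf f i :=
  RelEmbedding.ext (directLimitOf_map f h)

theorem exists_directLimitOf_eq (z : DirectLimit G f) : ∃ i x, directLimitOf f i x = z :=
  let ⟨i, x, h⟩ := exists_eq_mk f z
  ⟨i, x, h.symm⟩

theorem exists_directLimitOf_eq₂ (z w : DirectLimit G f) :
    ∃ i x y, directLimitOf f i x = z ∧ directLimitOf f i y = w :=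
  let ⟨i, x, y, hx, hy⟩ := exists_eq_mk₂ f z w
  ⟨i, x, y, hx.symm, hy.symm⟩

theorem range_directLimitOf_mono : Monotone fun i => Set.range (directLimitOf f i) := by
  rintro i j h _ ⟨x, rfl⟩
  exact ⟨f i j h x, directLimitOf_map f h x⟩

theorem exists_subset_range_directLimitOf [Nonempty ι] {s : Set (DirectLimit G f)}
    (hs : s.Finite) : ∃ i, s ⊆ Set.range (directLimitOf f i) := by
  obtain ⟨_, ⟨i, rfl⟩, hi⟩ := DirectedOn.exists_mem_subset_of_finite_of_subset_sUnion
    (Set.range_nonempty fun i => Set.range (directLimitOf f i))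
    (range_directLimitOf_mono f).directed_le.directedOn_range hs
    fun z _ => (exists_directLimitOf_eq f z).elim fun i hx => ⟨_, ⟨i, rfl⟩, hx⟩
  exact ⟨i, hi⟩

end OrderDirectLimit

section Chain

variable {G : ℕ → Type*} [∀ n, PartialOrder (G n)] (e : ∀ n, G n ↪o G (n + 1))

/-- The composite `G m ↪o G n` of a chain of order embeddings `G k ↪o G (k + 1)`. -/
def chainMap (m n : ℕ) (h : m ≤ n) : G m ↪o G n :=
  Nat.leRec (RelEmbedding.refl _) (fun k _ f => f.trans (e k)) h

theorem chainMap_self (n : ℕ) : chainMap e n n le_rfl = RelEmbedding.refl _ :=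
  Nat.leRec_self _ _

theorem chainMap_succ {m n : ℕ} (h : m ≤ n) :
    chainMap e m (n + 1) (h.trans n.le_succ) = (chainMap e m n h).trans (e n) :=
  Nat.leRec_succ _ _ _

theorem chainMap_self_succ (n : ℕ) : chainMap e n (n + 1) n.le_succ = e n := by
  rw [chainMap_succ e le_rfl, chainMap_self]
  rfl

instance chainMap_directedSystem : DirectedSystem G (chainMap e · · ·) where
  map_self n x := by rw [chainMap_self]; rfl
  map_map n m k hkm hmn x := by
    induction n, hmn using Nat.le_induction with
    | base => rw [chainMap_self]; rfl
    | succ n hmn ih =>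
      rw [chainMap_succ e hmn, chainMap_succ e (hkm.trans hmn)]
      exact congrArg (e n) ih

end Chain

theorem IsEmb.of_orderEmbedding {X Y : Type*} [PartialOrder X] [PartialOrder Y] (e : X ↪o Y) :
    IsEmb e := fun _ _ => e.le_iff_le.symm

theorem QuasiEmb.of_orderEmbedding {X Y : Type*} [PartialOrder X] [PartialOrder Y] (e : X ↪o Y) :
    QuasiEmb e := fun _ _ => e.le_iff_le.1

/-- The direct limit of a directed system of order embeddings as a bundled partial order. -/
abbrev POrd.directLimit {ι : Type} [Preorder ι] [IsDirectedOrder ι] {G : ι → POrd.{u}}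
    (f : ∀ i j, i ≤ j → G i ↪o G j) [DirectedSystem (fun i => G i) (f · · ·)] : POrd.{u} :=
  ⟨DirectLimit (fun i => G i) f⟩

namespace PODilator

variable (W : PODilator.{u}) {X Y Z : POrd.{u}}

/-- The action of a dilator on order embeddings. -/
def mapEmb (e : X ↪o Y) : W.obj X ↪o W.obj Y :=
  OrderEmbedding.ofMapLEIff (W.map e (.of_orderEmbedding e)) fun σ τ =>
    (W.map_emb e _ (.of_orderEmbedding e) σ τ).symm

theorem mapEmb_refl (σ : W.obj X) : W.mapEmb (RelEmbedding.refl _) σ = σ :=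
  congrFun (W.map_id X) σ

theorem mapEmb_mapEmb (e : X ↪o Y) (g : Y ↪o Z) (σ : W.obj X) :
    W.mapEmb g (W.mapEmb e σ) = W.mapEmb (e.trans g) σ :=
  (congrFun (W.map_comp e g (.of_orderEmbedding e) (.of_orderEmbedding g)) σ).symm

theorem supp_mapEmb (e : X ↪o Y) (σ : W.obj X) : W.supp (W.mapEmb e σ) = e '' W.supp σ :=
  W.supp_natural e _ σ

theorem exists_mapEmb_eq (e : X ↪o Y) {σ : W.obj Y} (h : W.supp σ ⊆ Set.range e) :
    ∃ τ, W.mapEmb e τ = σ :=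
  W.supp_cond e (.of_orderEmbedding e) (.of_orderEmbedding e) σ h

theorem exists_mapEmb_directLimitOf_eq {ι : Type} [Preorder ι] [IsDirectedOrder ι] [Nonempty ι]
    {G : ι → POrd.{u}} (f : ∀ i j, i ≤ j → G i ↪o G j) [DirectedSystem (fun i => G i) (f · · ·)]
    (σ : W.obj (.directLimit f)) :
    ∃ i τ, W.mapEmb (Y := .directLimit f) (directLimitOf f i) τ = σ :=
  let ⟨i, hi⟩ := exists_subset_range_directLimitOf f (W.supp_finite σ)
  ⟨i, W.exists_mapEmb_eq (Y := .directLimit f) (directLimitOf f i) hi⟩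

/-- The dilator `Y ↦ X ⊕ W Y`, in which the elements of `X` have empty support. A Kruskal fixed
point of `W` over `X` amounts to one of `constSum X W` over the empty order. -/
def constSum (X : POrd.{u}) (W : PODilator.{u}) : PODilator.{u} where
  obj Y := ⟨X ⊕ W.obj Y⟩
  map f hf := Sum.map id (W.map f hf)
  supp := Sum.elim (fun _ => ∅) W.supp
  map_quasiEmb f hf := by
    rintro (x | σ) (y | τ) h
    · exact Sum.inl_le_inl_iff.2 (Sum.inl_le_inl_iff.1 h)
    · exact (Sum.not_inl_le_inr h).elim
    · exact (Sum.not_inr_le_inl h).elim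
    · exact Sum.inr_le_inr_iff.2 (W.map_quasiEmb f hf σ τ (Sum.inr_le_inr_iff.1 h))
  map_id Y := by rw [W.map_id, Sum.map_id_id]
  map_comp f g hf hg := by rw [W.map_comp f g hf hg, Sum.map_comp_map, Function.id_comp]
  map_emb f hf he := by
    rintro (x | σ) (y | τ)
    · exact Sum.inl_le_inl_iff.trans Sum.inl_le_inl_iff.symm
    · exact iff_of_false Sum.not_inl_le_inr Sum.not_inl_le_inr
    · exact iff_of_false Sum.not_inr_le_inl Sum.not_inr_le_inl
    · exact Sum.inr_le_inr_iff.trans <| (W.map_emb f hf he σ τ).trans Sum.inr_le_inr_iff.symm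
  supp_finite := by
    rintro Y (_ | σ)
    · exact Set.finite_empty
    · exact W.supp_finite σ
  supp_natural f hf := by
    rintro (_ | σ)
    · exact (Set.image_empty f).symm
    · exact W.supp_natural f hf σ
  supp_cond f hf he := by
    rintro (x | σ) h
    · exact ⟨.inl x, rfl⟩
    · obtain ⟨τ, rfl⟩ := W.supp_cond f hf he σ h
      exact ⟨.inr τ, rfl⟩

variable {W} in
theorem IsNormal.constSum (hW : W.IsNormal) (X : POrd.{u}) : (constSum X W).IsNormal := by
  rintro Y (x | σ) (y | τ) h
  · exact fun _ hs => hs.elim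
  · exact fun _ hs => hs.elim
  · exact (Sum.not_inr_le_inl h).elim
  · exact hW Y σ τ (Sum.inr_le_inr_iff.1 h)

end PODilator

/-- A partial approximation to a Kruskal fixed point of `V` over the empty order: a partial order
with a partially defined constructor `V.obj Z → Z`, encoded by its (total) inverse `out`. -/
structure KruskalCoalgebra (V : PODilator.{u}) where
  carrier : POrd.{u}
  out : carrier → V.obj carrier
  le_iff : ∀ y z : carrier, y ≤ z ↔ out y ≤ out z ∨ ∃ s ∈ V.supp (out z), y ≤ s
  notMem_supp_out : ∀ z : carrier, z ∉ V.supp (out z)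

namespace KruskalCoalgebra

variable {V : PODilator.{u}}

instance : CoeSort (KruskalCoalgebra V) (Type u) := ⟨fun A => A.carrier⟩

section Order

variable (A : KruskalCoalgebra V)

theorem le_of_out_le_out {y z : A} (h : A.out y ≤ A.out z) : y ≤ z :=
  (A.le_iff y z).2 (.inl h)

theorem out_injective : Function.Injective A.out := fun _ _ h =>
  (A.le_of_out_le_out h.le).antisymm (A.le_of_out_le_out h.ge)

theorem lt_of_mem_supp_out {s z : A} (hs : s ∈ V.supp (A.out z)) : s < z :=
  lt_of_le_of_ne ((A.le_iff s z).2 (.inr ⟨s, hs, le_rfl⟩)) fun h =>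
    A.notMem_supp_out z (h ▸ hs)

/-- `A.Below σ z` says that `σ`, read as a term, is to lie below `z` although it need not denote
an element of `A`. -/
def Below (σ : V.obj A.carrier) (z : A) : Prop :=
  ∃ y ≤ z, σ ≤ A.out y

variable {A}

theorem Below.of_le {σ τ : V.obj A.carrier} {y z : A} (hστ : σ ≤ τ) (h : A.Below τ y)
    (hyz : y ≤ z) : A.Below σ z :=
  let ⟨w, hwy, hw⟩ := h
  ⟨w, hwy.trans hyz, hστ.trans hw⟩

theorem below_out {y z : A} : A.Below (A.out y) z ↔ y ≤ z :=
  ⟨fun ⟨_, hwz, hw⟩ => (A.le_of_out_le_out hw).trans hwz, fun h => ⟨y, h, le_rfl⟩⟩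

theorem below_iff {σ : V.obj A.carrier} {z : A} :
    A.Below σ z ↔ σ ≤ A.out z ∨ ∃ s ∈ V.supp (A.out z), A.Below σ s := by
  constructor
  · rintro ⟨y, hyz, hσ⟩
    obtain h | ⟨s, hs, hys⟩ := (A.le_iff y z).1 hyz
    · exact .inl (hσ.trans h)
    · exact .inr ⟨s, hs, y, hys, hσ⟩
  · rintro (h | ⟨s, hs, h⟩)
    · exact ⟨z, le_rfl, h⟩
    · exact h.of_le le_rfl (A.lt_of_mem_supp_out hs).le

theorem Below.lt_of_mem_supp [hV : Fact V.IsNormal] {σ : V.obj A.carrier} {s z : A}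
    (h : A.Below σ z) (hs : s ∈ V.supp σ) : s < z := by
  obtain ⟨y, hyz, hσ⟩ := h
  obtain ⟨t, ht, hst⟩ := hV.out _ _ _ hσ s hs
  exact hst.trans_lt ((A.lt_of_mem_supp_out ht).trans_le hyz)

end Order

section Step

/-- The carrier of the next approximation: one application of the constructor to arguments
from `A`. -/
structure Step (A : KruskalCoalgebra V) : Type u where
  shape : V.obj A.carrier

variable [hV : Fact V.IsNormal] (A : KruskalCoalgebra V)

instance : LE A.Step where
  le a b := a.shape ≤ b.shape ∨ ∃ z ∈ V.supp b.shape, A.Below a.shape z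

variable {A} in
theorem Step.exists_le_of_mem_supp {a b : A.Step} (h : a ≤ b) {s : A}
    (hs : s ∈ V.supp a.shape) : ∃ t ∈ V.supp b.shape, s ≤ t := by
  obtain h | ⟨t, ht, hat⟩ := h
  · exact hV.out _ _ _ h s hs
  · exact ⟨t, ht, (hat.lt_of_mem_supp hs).le⟩

variable {A} in
theorem Step.not_below_of_le {a b : A.Step} (h : a ≤ b) {s : A}
    (hs : s ∈ V.supp a.shape) : ¬ A.Below b.shape s := fun hbs =>
  let ⟨_, ht, hst⟩ := exists_le_of_mem_supp h hs
  (hbs.lt_of_mem_supp ht).not_ge hst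

instance : PartialOrder A.Step where
  le_refl a := .inl le_rfl
  le_trans a b c hab hbc := by
    obtain hab | ⟨s, hs, has⟩ := hab
    · obtain hbc | ⟨t, ht, hbt⟩ := hbc
      · exact .inl (hab.trans hbc)
      · exact .inr ⟨t, ht, hbt.of_le hab le_rfl⟩
    · obtain ⟨t, ht, hst⟩ := Step.exists_le_of_mem_supp hbc hs
      exact .inr ⟨t, ht, has.of_le le_rfl hst⟩
  le_antisymm a b hab hba := by
    obtain hab' | ⟨s, hs, has⟩ := hab
    · obtain hba' | ⟨t, ht, hbt⟩ := hba
      · exact congrArg Step.mk (hab'.antisymm hba')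
      · exact (Step.not_below_of_le (.inl hab') ht hbt).elim
    · exact (Step.not_below_of_le hba hs has).elim

/-- The inclusion of an approximation into the next one. -/
def toStep : A ↪o A.Step :=
  OrderEmbedding.ofMapLEIff (fun z => ⟨A.out z⟩) fun y z => by
    change _ ∨ (∃ s ∈ _, A.Below (A.out y) s) ↔ _
    simp only [below_out, A.le_iff y z]

theorem le_toStep_iff {a : A.Step} {z : A} :
    a ≤ A.toStep z ↔ A.Below a.shape z :=
  below_iff.symm

/-- The next approximation, in which every term over `A` denotes an element. -/
def step : KruskalCoalgebra V where
  carrier := ⟨A.Step⟩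
  out a := V.mapEmb (Y := ⟨A.Step⟩) A.toStep a.shape
  le_iff a b := by
    rw [OrderEmbedding.le_iff_le, V.supp_mapEmb, Set.exists_mem_image]
    simp only [le_toStep_iff]
    rfl
  notMem_supp_out a ha := by
    rw [V.supp_mapEmb] at ha
    obtain ⟨z, hz, rfl⟩ := ha
    exact A.notMem_supp_out z hz

end Step

/-- Coalgebra morphisms, that is, embeddings compatible with the partial constructors. -/
def IsHom {A B : KruskalCoalgebra V} (f : A ↪o B) : Prop :=
  ∀ z, B.out (f z) = V.mapEmb f (A.out z)

theorem isHom_refl (A : KruskalCoalgebra V) : IsHom (RelEmbedding.refl _ : A ↪o A) := fun z =>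
  (V.mapEmb_refl (A.out z)).symm

theorem IsHom.trans {A B C : KruskalCoalgebra V} {f : A ↪o B} {g : B ↪o C} (hg : IsHom g)
    (hf : IsHom f) : IsHom (f.trans g) := fun z =>
  (hg (f z)).trans <| by rw [hf z, V.mapEmb_mapEmb]

theorem isHom_toStep [Fact V.IsNormal] (A : KruskalCoalgebra V) :
    IsHom (B := A.step) A.toStep := fun _ => rfl

theorem isHom_chainMap {A : ℕ → KruskalCoalgebra V} {e : ∀ n, A n ↪o A (n + 1)}
    (he : ∀ n, IsHom (e n)) {m n : ℕ} (h : m ≤ n) : IsHom (chainMap e m n h) := by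
  induction n, h using Nat.le_induction with
  | base => exact chainMap_self e m ▸ isHom_refl _
  | succ n h ih => exact chainMap_succ e h ▸ (he n).trans ih

section Limit

variable {ι : Type} [Preorder ι] [IsDirectedOrder ι] {A : ι → KruskalCoalgebra V}
  (f : ∀ i j, i ≤ j → A i ↪o A j) [DirectedSystem (fun i => A i) (f · · ·)]

/-- The inverse partial constructor of the direct limit. -/
def limitOut (hf : ∀ i j h, IsHom (f i j h)) :
    POrd.directLimit f → V.obj (.directLimit f) :=
  DirectLimit.lift f (fun i z => V.mapEmb (Y := .directLimit f) (directLimitOf f i) ((A i).out z))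
    fun i j h z => by rw [hf i j h z, V.mapEmb_mapEmb, trans_directLimitOf f h]

theorem limitOut_directLimitOf (hf : ∀ i j h, IsHom (f i j h)) {i : ι} (z : A i) :
    limitOut f hf (directLimitOf f i z) =
      V.mapEmb (Y := .directLimit f) (directLimitOf f i) ((A i).out z) :=
  rfl

/-- The direct limit of a directed system of approximations. -/
def limit (hf : ∀ i j h, IsHom (f i j h)) : KruskalCoalgebra V where
  carrier := .directLimit f
  out := limitOut f hf
  le_iff y z := by
    obtain ⟨i, y, z, rfl, rfl⟩ := exists_directLimitOf_eq₂ f y z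
    simp only [limitOut_directLimitOf, OrderEmbedding.le_iff_le, V.supp_mapEmb,
      Set.exists_mem_image, (A i).le_iff y z]
  notMem_supp_out z hz := by
    obtain ⟨i, z, rfl⟩ := exists_directLimitOf_eq f z
    rw [limitOut_directLimitOf, V.supp_mapEmb,
      (directLimitOf f i).injective.mem_set_image] at hz
    exact (A i).notMem_supp_out z hz

end Limit

section Stages

variable (V) [Fact V.IsNormal]

/-- The approximation on which the construction starts: the empty order. -/
def empty : KruskalCoalgebra V where
  carrier := ⟨PEmpty⟩
  out := PEmpty.elim
  le_iff y := y.elim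
  notMem_supp_out z := z.elim

/-- The approximations obtained from the empty one by iterating `step`. -/
def stage : ℕ → KruskalCoalgebra V
  | 0 => empty V
  | n + 1 => (stage n).step

/-- The inclusions between the approximations `stage V n`. -/
def stageMap (m n : ℕ) (h : m ≤ n) : stage V m ↪o stage V n :=
  chainMap (G := fun n => stage V n) (fun n => (stage V n).toStep) m n h

instance : DirectedSystem (fun n => stage V n) (stageMap V · · ·) :=
  chainMap_directedSystem (G := fun n => stage V n) fun n => (stage V n).toStep

theorem stageMap_succ (n : ℕ) (z : stage V n) :
    stageMap V n (n + 1) n.le_succ z = (stage V n).toStep z :=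
  DFunLike.congr_fun (chainMap_self_succ (G := fun n => stage V n) _ n) z

theorem isHom_stageMap (m n : ℕ) (h : m ≤ n) : IsHom (stageMap V m n h) :=
  isHom_chainMap (fun n => (stage V n).isHom_toStep) h

/-- The union of all approximations `stage V n`. -/
def stageLimit : KruskalCoalgebra V :=
  limit (stageMap V) (isHom_stageMap V)

/-- The inclusion of an approximation `stage V n` into the union. -/
def stageIncl (n : ℕ) : stage V n ↪o stageLimit V :=
  directLimitOf (stageMap V) n

theorem stageIncl_toStep {n : ℕ} (z : stage V n) :
    stageIncl V (n + 1) ((stage V n).toStep z) = stageIncl V n z := by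
  rw [← stageMap_succ]
  exact directLimitOf_map (stageMap V) n.le_succ z

theorem out_stageIncl {n : ℕ} (z : stage V n) :
    (stageLimit V).out (stageIncl V n z) = V.mapEmb (stageIncl V n) ((stage V n).out z) :=
  rfl

theorem out_stageIncl_succ {n : ℕ} (a : (stage V n).Step) :
    (stageLimit V).out (stageIncl V (n + 1) a) = V.mapEmb (stageIncl V n) a.shape := by
  have incl_toStep : (stage V n).toStep.trans (stageIncl V (n + 1)) = stageIncl V n :=
    RelEmbedding.ext (stageIncl_toStep V)
  refine (out_stageIncl V (n := n + 1) a).trans ?_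
  exact (V.mapEmb_mapEmb (Y := ⟨(stage V n).Step⟩) _ _ _).trans (by rw [incl_toStep])

theorem stageLimit_out_bijective : Function.Bijective (stageLimit V).out := by
  refine ⟨(stageLimit V).out_injective, fun σ => ?_⟩
  obtain ⟨n, τ, rfl⟩ := V.exists_mapEmb_directLimitOf_eq (stageMap V) σ
  exact ⟨stageIncl V (n + 1) ⟨τ⟩, out_stageIncl_succ V ⟨τ⟩⟩

variable {V} in
theorem exists_mem_range_stageIncl_of_mem_supp_out {n : ℕ} {z : stage V n} {s : stageLimit V}
    (hs : s ∈ V.supp ((stageLimit V).out (stageIncl V n z))) :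
    ∃ m < n, s ∈ Set.range (stageIncl V m) := by
  cases n with
  | zero => exact PEmpty.elim z
  | succ n =>
    replace hs := (congrArg V.supp (out_stageIncl_succ V z)).subset hs
    rw [V.supp_mapEmb] at hs
    exact ⟨n, n.lt_succ_self, Set.image_subset_range _ _ hs⟩

theorem exists_stageLimit_height : ∃ h : stageLimit V → ℕ,
    ∀ s z, s ∈ V.supp ((stageLimit V).out z) → h s < h z := by
  classical
  -- The height of an element is the index of the first approximation it belongs to.
  have mem_stage (z : stageLimit V) : ∃ n, z ∈ Set.range (stageIncl V n) :=
    exists_directLimitOf_eq (stageMap V) z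
  refine ⟨fun z => Nat.find (mem_stage z), fun s z hs => ?_⟩
  obtain ⟨a, ha⟩ := Nat.find_spec (mem_stage z)
  rw [← ha] at hs
  exact (Nat.find_lt_iff _ _).2 (exists_mem_range_stageIncl_of_mem_supp_out hs)

end Stages

section FixedPoint

/-- The constructor of a coalgebra in which it is totally defined. -/
noncomputable def fold (A : KruskalCoalgebra V) (hA : Function.Bijective A.out) :
    V.obj A.carrier ≃ A :=
  (Equiv.ofBijective A.out hA).symm

section

variable (A : KruskalCoalgebra V) (hA : Function.Bijective A.out)

theorem out_fold (σ : V.obj A.carrier) : A.out (A.fold hA σ) = σ :=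
  (Equiv.ofBijective A.out hA).apply_symm_apply σ

theorem fold_le_fold (σ τ : V.obj A.carrier) :
    A.fold hA σ ≤ A.fold hA τ ↔ σ ≤ τ ∨ ∃ s ∈ V.supp τ, A.fold hA σ ≤ s := by
  rw [A.le_iff, out_fold, out_fold]

end

variable {W : PODilator.{u}} {X : POrd.{u}} (A : KruskalCoalgebra (.constSum X W))
  (hA : Function.Bijective A.out)

theorem isKruskalFP : IsKruskalFP W X A.carrier (fun x => A.fold hA (.inl x))
    (fun σ => A.fold hA (.inr σ)) where
  range_disjoint := by
    rw [← Set.disjoint_iff_inter_eq_empty, Set.disjoint_range_iff]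
    exact fun x σ h => Sum.inl_ne_inr ((A.fold hA).injective h)
  iota_le x y h := by
    obtain h | ⟨s, hs, -⟩ := (A.fold_le_fold hA _ _).1 h
    · exact Sum.inl_le_inl_iff.1 h
    · exact hs.elim
  iota_kappa x τ := (A.fold_le_fold hA _ _).trans (or_iff_right Sum.not_inl_le_inr)
  kappa_iota σ y h := by
    obtain h | ⟨s, hs, -⟩ := (A.fold_le_fold hA _ _).1 h
    · exact Sum.not_inr_le_inl h
    · exact hs.elim
  kappa_kappa σ τ := (A.fold_le_fold hA _ _).trans (or_congr_left Sum.inr_le_inr_iff)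

theorem kfpCondI {h : A → ℕ}
    (hh : ∀ s z, s ∈ (PODilator.constSum X W).supp (A.out z) → h s < h z) :
    KFPCondI W X A.carrier (fun x => A.fold hA (.inl x)) (fun σ => A.fold hA (.inr σ)) where
  range_union := by
    refine Set.eq_univ_of_forall fun z => ?_
    obtain ⟨x | σ, rfl⟩ := (A.fold hA).surjective z
    · exact .inl ⟨x, rfl⟩
    · exact .inr ⟨σ, rfl⟩
  iota_mono x y hxy := (A.fold_le_fold hA _ _).2 (.inl (Sum.inl_le_inl_iff.2 hxy))
  height := ⟨h, fun s σ hs =>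
    hh s _ ((congrArg (PODilator.supp _) (A.out_fold hA (.inr σ))).superset hs)⟩

end FixedPoint

end KruskalCoalgebra

/-- For every normal PO-dilator `W` and partial order `X` there is a Kruskal fixed
point of `W` over `X` satisfying condition (i). -/
theorem exists_kruskalFP_condI (W : PODilator.{u}) (hW : W.IsNormal) (X : POrd.{u}) :
    ∃ (Z : POrd.{u}) (ι : X → Z) (κ : W.obj Z → Z),
      IsKruskalFP W X Z ι κ ∧ KFPCondI W X Z ι κ := by
  have : Fact (PODilator.constSum X W).IsNormal := ⟨hW.constSum X⟩
  have hA := KruskalCoalgebra.stageLimit_out_bijective (.constSum X W)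
  obtain ⟨h, hh⟩ := KruskalCoalgebra.exists_stageLimit_height (.constSum X W)
  exact ⟨_, _, _, KruskalCoalgebra.isKruskalFP _ hA, KruskalCoalgebra.kfpCondI _ hA hh⟩
end

section
/- Let (Z, ι, κ) be a Kruskal fixed point of a normal PO-dilator W over a partial order X. Then (Z, ι, κ) satisfies condition (i) if and only if (Z, ι, κ) is initial. -/
universe u

/-! Every element of a fixed point satisfying (i) is denoted by a term of the form `ι x` or `κ σ`,
where `σ` involves finitely many simpler terms. So put `P 0 = ∅` and `P (n + 1) = X ⊔ W (P n)`,
ordered by the clauses that a Kruskal fixed point has to satisfy. Normality makes this an order,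
and each `P n` embeds into `P (n + 1)`. Terms can be evaluated in an arbitrary Kruskal fixed point,
which gives compatible quasi embeddings `g n : P n → Z`. If `Z` satisfies (i), these are embeddings
and jointly surjective, that is, `Z` is the colimit of the `P n`. Evaluation in another fixed point
then induces a morphism out of `Z`, and this is the only one because its values on `P n` are
determined by recursion on `n`.

Conversely, since supports are finite, `W` preserves the colimit of the `P n`, which is therefore
itself a Kruskal fixed point. It satisfies (i), with the least `n` such that `z` comes from `P n` as
the height of `z`. An initial fixed point is a retract of this one, and (i) passes to retracts. -/

theorem QuasiEmb.injective {X Y : Type*} [PartialOrder X] [PartialOrder Y] {f : X → Y}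
    (hf : QuasiEmb f) : Function.Injective f :=
  fun x y h ↦ le_antisymm (hf x y h.le) (hf y x h.ge)

theorem IsEmb.quasiEmb {X Y : Type*} [PartialOrder X] [PartialOrder Y] {f : X → Y}
    (hf : IsEmb f) : QuasiEmb f :=
  fun x y ↦ (hf x y).2

theorem PODilator.map_map_of_comp_eq (W : PODilator.{u}) {X Y Z : POrd.{u}} {f : X → Y}
    {g : Y → Z} {k : X → Z} (hf : QuasiEmb f) (hg : QuasiEmb g) (hk : QuasiEmb k)
    (h : ∀ x, g (f x) = k x) (σ : W.obj X) : W.map g hg (W.map f hf σ) = W.map k hk σ := by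
  obtain rfl : g ∘ f = k := funext h
  exact (congrFun (W.map_comp f g hf hg) σ).symm

theorem PODilator.exists_mem_supp_map {W : PODilator.{u}} {X Y : POrd.{u}} {f : X → Y}
    (hf : QuasiEmb f) {σ : W.obj X} {p : Y → Prop} :
    (∃ y ∈ W.supp (W.map f hf σ), p y) ↔ ∃ x ∈ W.supp σ, p (f x) := by
  rw [W.supp_natural, Set.exists_mem_image]

/-- A sequence of partial orders in which each one is embedded into the next. -/
structure POrdChain : Type (u + 1) where
  obj : ℕ → POrd.{u}
  link : ∀ n, obj n → obj (n + 1)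
  isEmb_link : ∀ n, IsEmb (link n)

namespace POrdChain

variable (c : POrdChain.{u})

/-- The composite of the links from index `m` to index `n`. -/
def trans {m n : ℕ} (h : m ≤ n) : c.obj m → c.obj n :=
  Nat.leRecOn h (c.link _)

theorem isEmb_trans {m n : ℕ} (h : m ≤ n) : IsEmb (c.trans h) := by
  induction n, h using Nat.le_induction with
  | base => simp [IsEmb, trans, Nat.leRecOn_self]
  | succ n h ih =>
    intro a b
    simp only [trans, Nat.leRecOn_succ h]
    exact (ih a b).trans (c.isEmb_link n _ _)

/-- The disjoint union of a chain, preordered by comparing elements at a common index; its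
antisymmetrization is the colimit of the chain. -/
structure Union : Type u where
  index : ℕ
  elem : c.obj index

instance : Preorder c.Union where
  le a b := ∃ n, ∃ (ha : a.index ≤ n) (hb : b.index ≤ n), c.trans ha a.elem ≤ c.trans hb b.elem
  le_refl a := ⟨a.1, le_rfl, le_rfl, le_rfl⟩
  le_trans := by
    rintro a b d ⟨m, ha, hb, hab⟩ ⟨n, hb', hd, hbd⟩
    have hm := (c.isEmb_trans (le_max_left m n) _ _).1 hab
    have hn := (c.isEmb_trans (le_max_right m n) _ _).1 hbd
    simp only [trans, ← Nat.leRecOn_trans] at hm hn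
    exact ⟨max m n, _, _, hm.trans hn⟩

theorem union_mk_le_mk_iff {n : ℕ} {a b : c.obj n} :
    (⟨n, a⟩ : c.Union) ≤ ⟨n, b⟩ ↔ a ≤ b := by
  constructor
  · rintro ⟨m, h, _, hab⟩
    exact (c.isEmb_trans h a b).2 hab
  · intro h
    refine ⟨n, le_rfl, le_rfl, ?_⟩
    simpa only [trans, Nat.leRecOn_self] using h

variable {c}

/-- Compatibility of a family of functions on the members of a chain with its links. -/
def IsCompatible (c : POrdChain.{u}) {Z : Type*} (f : ∀ n, c.obj n → Z) : Prop :=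
  ∀ n a, f (n + 1) (c.link n a) = f n a

theorem IsCompatible.apply_trans {Z : Type*} {f : ∀ n, c.obj n → Z} (hf : c.IsCompatible f)
    {m n : ℕ} (h : m ≤ n) (a : c.obj m) : f n (c.trans h a) = f m a := by
  induction n, h using Nat.le_induction with
  | base => rw [trans, Nat.leRecOn_self]
  | succ n h ih => rw [trans, Nat.leRecOn_succ h, hf]; exact ih

theorem IsCompatible.monotone_range {Z : Type*} {f : ∀ n, c.obj n → Z}
    (hf : c.IsCompatible f) : Monotone fun n ↦ Set.range (f n) := by
  rintro m n h _ ⟨a, rfl⟩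
  exact ⟨c.trans h a, hf.apply_trans h a⟩

theorem IsCompatible.exists_subset_range {Z : Type*} {f : ∀ n, c.obj n → Z}
    (hf : c.IsCompatible f) {s : Set Z} (hs : s.Finite) (h : ∀ z ∈ s, ∃ n, z ∈ Set.range (f n)) :
    ∃ n, s ⊆ Set.range (f n) := by
  have hdir : DirectedOn (· ⊆ ·) (Set.range fun n ↦ Set.range (f n)) :=
    directedOn_range.2 hf.monotone_range.directed_le
  obtain ⟨_, ⟨n, rfl⟩, hn⟩ := hdir.exists_mem_subset_of_finite_of_subset_sUnion
    (Set.range_nonempty _) hs fun z hz ↦ by simpa using h z hz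
  exact ⟨n, hn⟩

/-- `Z` is a colimit of the chain `c`, with the maps `f n` as coprojections. -/
structure IsColimit (c : POrdChain.{u}) {Z : POrd.{u}} (f : ∀ n, c.obj n → Z) : Prop where
  isEmb : ∀ n, IsEmb (f n)
  isCompatible : c.IsCompatible f
  exists_eq : ∀ z, ∃ n a, f n a = z

variable (c) in
theorem exists_isColimit : ∃ (Z : POrd.{u}) (f : ∀ n, c.obj n → Z), c.IsColimit f := by
  refine ⟨⟨Antisymmetrization c.Union (· ≤ ·)⟩,
    fun n a ↦ toAntisymmetrization _ ⟨n, a⟩, fun n a b ↦ c.union_mk_le_mk_iff.symm,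
    fun n a ↦ Quotient.sound ?_, fun z ↦ ?_⟩
  · have h : c.trans n.le_succ a = c.link n a := Nat.leRecOn_succ' _
    have h' : c.trans le_rfl (c.link n a) = c.link n a := Nat.leRecOn_self _
    exact ⟨⟨n + 1, le_rfl, n.le_succ, (h'.trans h.symm).le⟩,
      ⟨n + 1, n.le_succ, le_rfl, (h.trans h'.symm).le⟩⟩
  · induction z using Antisymmetrization.ind with
    | _ a => exact ⟨a.index, a.elem, rfl⟩

namespace IsColimit

variable {Z : POrd.{u}} {f : ∀ n, c.obj n → Z}

theorem exists_eq_and_eq (hf : c.IsColimit f) (z w : Z) : ∃ n a b, f n a = z ∧ f n b = w := by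
  obtain ⟨m, a, rfl⟩ := hf.exists_eq z
  obtain ⟨n, b, rfl⟩ := hf.exists_eq w
  exact ⟨max m n, _, _, hf.isCompatible.apply_trans (le_max_left m n) a,
    hf.isCompatible.apply_trans (le_max_right m n) b⟩

theorem exists_desc (hf : c.IsColimit f) {Y : Type*} {g : ∀ n, c.obj n → Y}
    (hg : c.IsCompatible g) : ∃ k : Z → Y, ∀ n a, k (f n a) = g n a := by
  have hfg : ∀ m n a b, f m a = f n b → g m a = g n b := by
    intro m n a b hab
    rw [← hf.isCompatible.apply_trans (le_max_left m n),
      ← hf.isCompatible.apply_trans (le_max_right m n)] at hab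
    rw [← hg.apply_trans (le_max_left m n), (hf.isEmb _).quasiEmb.injective hab, hg.apply_trans]
  choose n a ha using hf.exists_eq
  exact ⟨fun z ↦ g (n z) (a z), fun m b ↦ hfg _ _ _ _ (ha (f m b))⟩

theorem quasiEmb_of_forall (hf : c.IsColimit f) {Y : POrd.{u}} {k : Z → Y}
    (hk : ∀ n, QuasiEmb fun a ↦ k (f n a)) : QuasiEmb k := by
  intro z w h
  obtain ⟨n, a, b, rfl, rfl⟩ := hf.exists_eq_and_eq z w
  exact (hf.isEmb n a b).1 (hk n a b h)

end IsColimit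

/-- The image of a chain under a PO-dilator. -/
abbrev mapDilator (c : POrdChain.{u}) (W : PODilator.{u}) : POrdChain.{u} where
  obj n := W.obj (c.obj n)
  link n := W.map (c.link n) (c.isEmb_link n).quasiEmb
  isEmb_link n := W.map_emb _ _ (c.isEmb_link n)

variable {W : PODilator.{u}} {Z : POrd.{u}} {f : ∀ n, c.obj n → Z}

theorem exists_map_eq (hf : c.IsCompatible f) (he : ∀ n, IsEmb (f n)) (σ : W.obj Z)
    (hσ : ∀ s ∈ W.supp σ, ∃ n, s ∈ Set.range (f n)) :
    ∃ n σ₀, W.map (f n) (he n).quasiEmb σ₀ = σ := by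
  obtain ⟨n, hn⟩ := hf.exists_subset_range (W.supp_finite σ) hσ
  exact ⟨n, W.supp_cond (f n) _ (he n) σ hn⟩

theorem IsColimit.mapDilator (hf : c.IsColimit f) :
    (c.mapDilator W).IsColimit fun n ↦ W.map (f n) (hf.isEmb n).quasiEmb where
  isEmb n := W.map_emb _ _ (hf.isEmb n)
  isCompatible n σ := W.map_map_of_comp_eq _ _ _ (hf.isCompatible n) σ
  exists_eq σ := exists_map_eq hf.isCompatible hf.isEmb σ fun s _ ↦ hf.exists_eq s

end POrdChain

/-- The order that a Kruskal fixed point must carry on terms of the form `ι x` (here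
`Sum.inl x`) and `κ σ` (here `Sum.inr σ`) whose immediate subterms are taken from `P`, where
`dest` says how an element of `P` is itself written as such a term. -/
inductive TermLE {W : PODilator.{u}} {X P : POrd.{u}} (dest : P → X ⊕ W.obj P) :
    X ⊕ W.obj P → X ⊕ W.obj P → Prop
  | iota {x y : X} : x ≤ y → TermLE dest (.inl x) (.inl y)
  | kappa {σ τ : W.obj P} : σ ≤ τ → TermLE dest (.inr σ) (.inr τ)
  | sub {a : X ⊕ W.obj P} {τ : W.obj P} {z : P} :
      z ∈ W.supp τ → TermLE dest a (dest z) → TermLE dest a (.inr τ)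

namespace TermLE

variable {W : PODilator.{u}} {X P : POrd.{u}} {dest : P → X ⊕ W.obj P}

theorem inl_inl_iff {x y : X} : TermLE dest (.inl x) (.inl y) ↔ x ≤ y :=
  ⟨fun | .iota h => h, .iota⟩

theorem not_inr_inl {σ : W.obj P} {y : X} : ¬ TermLE dest (.inr σ) (.inl y) := nofun

theorem inl_inr_iff {x : X} {τ : W.obj P} :
    TermLE dest (.inl x) (.inr τ) ↔ ∃ z ∈ W.supp τ, TermLE dest (.inl x) (dest z) :=
  ⟨fun | .sub hz h => ⟨_, hz, h⟩, fun ⟨_, hz, h⟩ ↦ .sub hz h⟩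

theorem inr_inr_iff {σ τ : W.obj P} :
    TermLE dest (.inr σ) (.inr τ) ↔
      σ ≤ τ ∨ ∃ z ∈ W.supp τ, TermLE dest (.inr σ) (dest z) :=
  ⟨fun | .kappa h => .inl h | .sub hz h => .inr ⟨_, hz, h⟩,
    fun | .inl h => .kappa h | .inr ⟨_, hz, h⟩ => .sub hz h⟩

theorem refl : ∀ a, TermLE dest a a
  | .inl _ => .iota le_rfl
  | .inr _ => .kappa le_rfl

section Normal

variable (hW : W.IsNormal) (hdest : ∀ z w, z ≤ w → TermLE dest (dest z) (dest w))
include hW hdest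

theorem dest_le_of_inr_le {σ : W.obj P} {c : X ⊕ W.obj P} (h : TermLE dest (.inr σ) c) {z : P}
    (hz : z ∈ W.supp σ) : TermLE dest (dest z) c := by
  generalize ha : Sum.inr σ = a at h
  induction h with
  | iota => cases ha
  | kappa hστ =>
    cases ha
    obtain ⟨w, hw, hzw⟩ := hW _ _ _ hστ z hz
    exact .sub hw (hdest z w hzw)
  | sub hw _ ih => exact .sub hw (ih ha)

theorem exists_dest_le_dest {σ τ : W.obj P} (h : TermLE dest (.inr σ) (.inr τ)) {z : P}
    (hz : z ∈ W.supp σ) : ∃ w ∈ W.supp τ, TermLE dest (dest z) (dest w) := by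
  rcases inr_inr_iff.1 h with hστ | ⟨w, hw, hσw⟩
  · obtain ⟨w, hw, hzw⟩ := hW _ _ _ hστ z hz
    exact ⟨w, hw, hdest z w hzw⟩
  · exact ⟨w, hw, dest_le_of_inr_le hW hdest hσw hz⟩

theorem trans {a b c : X ⊕ W.obj P} (hab : TermLE dest a b) (hbc : TermLE dest b c) :
    TermLE dest a c := by
  induction hab generalizing c with
  | iota hxy =>
    generalize hb : Sum.inl _ = b at hbc
    induction hbc with
    | iota hyz => cases hb; exact .iota (hxy.trans hyz)
    | kappa => cases hb
    | sub hz _ ih => exact .sub hz (ih hb)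
  | kappa hστ =>
    generalize hb : Sum.inr _ = b at hbc
    induction hbc with
    | iota => cases hb
    | kappa hτρ => cases hb; exact .kappa (hστ.trans hτρ)
    | sub hz _ ih => exact .sub hz (ih hb)
  | sub hz _ ih => exact ih (dest_le_of_inr_le hW hdest hbc hz)

end Normal

end TermLE

/-- An approximation to the initial Kruskal fixed point: a partial order whose elements are
identified through `dest` with terms in the order `TermLE dest`, and on which induction over
the subterms of a term is sound. -/
structure KruskalStage (W : PODilator.{u}) (X : POrd.{u}) : Type (u + 1) where
  carrier : POrd.{u}
  dest : carrier → X ⊕ W.obj carrier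
  le_iff : ∀ a b, a ≤ b ↔ TermLE dest (dest a) (dest b)
  induction : ∀ p : X ⊕ W.obj carrier → Prop, (∀ x, p (.inl x)) →
    (∀ τ, (∀ z ∈ W.supp τ, p (dest z)) → p (.inr τ)) → ∀ a, p a

namespace KruskalStage

variable {W : PODilator.{u}} {X : POrd.{u}}

section Next

variable (S : KruskalStage W X) (hW : W.IsNormal)

include hW in
theorem not_inr_le_dest {τ : W.obj S.carrier} {z : S.carrier} (hz : z ∈ W.supp τ) :
    ¬ TermLE S.dest (.inr τ) (S.dest z) := by
  -- Descent: a counterexample `z ∈ supp τ` with `dest z = inr ρ` yields one with some `w ∈ supp ρ`.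
  suffices ∀ a τ, (∃ z ∈ W.supp τ, S.dest z = a) → ¬ TermLE S.dest (.inr τ) a from
    this _ τ ⟨z, hz, rfl⟩
  refine S.induction _ (fun _ _ _ ↦ TermLE.not_inr_inl) ?_
  rintro ρ ih τ ⟨z, hz, hzρ⟩ hτρ
  obtain ⟨w, hw, hzw⟩ := TermLE.exists_dest_le_dest hW (fun z w ↦ (S.le_iff z w).1) hτρ hz
  exact ih w hw ρ ⟨w, hw, rfl⟩ (hzρ ▸ hzw)

include hW in
theorem termLE_antisymm {a b : X ⊕ W.obj S.carrier} (hab : TermLE S.dest a b)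
    (hba : TermLE S.dest b a) : a = b := by
  have trans {a b c} : TermLE S.dest a b → TermLE S.dest b c → TermLE S.dest a c :=
    TermLE.trans hW fun z w ↦ (S.le_iff z w).1
  cases hab with
  | iota hxy => rw [le_antisymm hxy (TermLE.inl_inl_iff.1 hba)]
  | kappa hστ =>
    cases hba with
    | kappa hτσ => rw [le_antisymm hστ hτσ]
    | sub hz hτz => exact (S.not_inr_le_dest hW hz (trans (.kappa hστ) hτz)).elim
  | sub hz haz => exact (S.not_inr_le_dest hW hz (trans hba haz)).elim

/-- The terms with immediate subterms from `S`. -/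
def nextOrd : POrd.{u} :=
  @POrd.mk (X ⊕ W.obj S.carrier)
    { le := TermLE S.dest
      lt a b := TermLE S.dest a b ∧ ¬ TermLE S.dest b a
      le_refl := TermLE.refl
      le_trans := fun _ _ _ ↦ TermLE.trans hW fun z w ↦ (S.le_iff z w).1
      le_antisymm := fun _ _ ↦ S.termLE_antisymm hW }

/-- The identification of the elements of a stage with terms, as a map to the next stage. -/
def toNext : S.carrier → S.nextOrd hW := S.dest

theorem isEmb_toNext : IsEmb (S.toNext hW) := S.le_iff

/-- The terms with immediate subterms from `S`, as terms with immediate subterms from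
`S.nextOrd hW`. -/
def nextDest : S.nextOrd hW → X ⊕ W.obj (S.nextOrd hW) :=
  Sum.map id (W.map (S.toNext hW) (S.isEmb_toNext hW).quasiEmb)

theorem nextOrd_le_iff (a b : S.nextOrd hW) :
    a ≤ b ↔ TermLE (S.nextDest hW) (S.nextDest hW a) (S.nextDest hW b) := by
  constructor
  · intro h
    change TermLE S.dest a b at h
    induction h with
    | iota hxy => exact .iota hxy
    | kappa hστ => exact .kappa ((W.map_emb _ _ (S.isEmb_toNext hW) _ _).1 hστ)
    | sub hz _ ih => exact .sub (W.supp_natural _ _ _ ▸ Set.mem_image_of_mem _ hz) ih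
  · intro h
    change TermLE S.dest a b
    generalize ha' : S.nextDest hW a = a', hb' : S.nextDest hW b = b' at h
    induction h generalizing b with
    | iota hxy =>
      cases a <;> cases b <;> cases ha' <;> cases hb'
      exact .iota hxy
    | kappa hστ =>
      cases a <;> cases b <;> cases ha' <;> cases hb'
      exact .kappa ((W.map_emb _ _ (S.isEmb_toNext hW) _ _).2 hστ)
    | sub hz _ ih =>
      cases b <;> cases hb'
      obtain ⟨z, hz', rfl⟩ := (W.supp_natural _ _ _).subset hz
      exact .sub hz' (ih _ ha' rfl)

/-- The stage obtained from `S` by one further layer of term formation. -/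
def next : KruskalStage W X where
  carrier := S.nextOrd hW
  dest := S.nextDest hW
  le_iff := S.nextOrd_le_iff hW
  induction p hι hκ := by
    have h : ∀ a, p (S.nextDest hW a) :=
      S.induction _ hι fun τ ih ↦ hκ _ fun z hz ↦ by
        obtain ⟨w, hw, rfl⟩ := W.supp_natural _ _ _ ▸ hz
        exact ih w hw
    rintro (x | τ)
    · exact hι x
    · exact hκ τ fun z _ ↦ h z

end Next

variable (W X) in
/-- The stage without elements. -/
def empty : KruskalStage W X where
  carrier := ⟨PEmpty⟩
  dest := PEmpty.elim
  le_iff a := a.elim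
  induction _ hι hκ := Sum.rec hι fun τ ↦ hκ τ fun z ↦ z.elim

end KruskalStage

/-- The finite stages of the construction of the initial Kruskal fixed point. -/
def kruskalStage {W : PODilator.{u}} (hW : W.IsNormal) (X : POrd.{u}) : ℕ → KruskalStage W X
  | 0 => .empty W X
  | n + 1 => (kruskalStage hW X n).next hW

/-- The stages `kruskalStage hW X n`, linked by identifying elements with terms. -/
abbrev kruskalChain {W : PODilator.{u}} (hW : W.IsNormal) (X : POrd.{u}) : POrdChain.{u} where
  obj n := (kruskalStage hW X n).carrier
  link n := (kruskalStage hW X n).toNext hW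
  isEmb_link n := (kruskalStage hW X n).isEmb_toNext hW

/-- A function on a stage into a structure `(Z, ι, κ)` that evaluates terms by means of `ι` and
`κ`. -/
structure StageMap {W : PODilator.{u}} {X Z : POrd.{u}} (S : KruskalStage W X) (ι : X → Z)
    (κ : W.obj Z → Z) where
  toFun : S.carrier → Z
  quasiEmb : QuasiEmb toFun
  elim_dest : ∀ z, Sum.elim ι (κ ∘ W.map toFun quasiEmb) (S.dest z) = toFun z

namespace StageMap

variable {W : PODilator.{u}} {X Z : POrd.{u}} {ι : X → Z} {κ : W.obj Z → Z}

/-- The evaluation of terms whose immediate subterms are evaluated by a given `StageMap`. -/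
def eval {S : KruskalStage W X} (f : StageMap S ι κ) : X ⊕ W.obj S.carrier → Z :=
  Sum.elim ι (κ ∘ W.map f.toFun f.quasiEmb)

variable {S : KruskalStage W X} (f : StageMap S ι κ)

theorem termLE_of_eval_le (hK : IsKruskalFP W X Z ι κ) {a b : X ⊕ W.obj S.carrier}
    (h : f.eval a ≤ f.eval b) : TermLE S.dest a b := by
  suffices ∀ b a, f.eval a ≤ f.eval b → TermLE S.dest a b from this b a h
  refine S.induction _ ?_ ?_
  · rintro y (x | σ) h
    · exact .iota (hK.iota_le x y h)
    · exact (hK.kappa_iota _ y h).elim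
  · intro τ ih a h
    have sub : (∃ z ∈ W.supp (W.map f.toFun f.quasiEmb τ), f.eval a ≤ z) →
        TermLE S.dest a (.inr τ) := by
      rw [PODilator.exists_mem_supp_map]
      rintro ⟨z, hz, haz⟩
      exact .sub hz (ih z hz a (haz.trans_eq (f.elim_dest z).symm))
    rcases a with x | σ
    · exact sub ((hK.iota_kappa x _).1 h)
    · rcases (hK.kappa_kappa _ _).1 h with hστ | hσ
      · exact .kappa (W.map_quasiEmb _ _ _ _ hστ)
      · exact sub hσ

theorem eval_le_of_termLE (hK : IsKruskalFP W X Z ι κ) (hι : ∀ x y, x ≤ y → ι x ≤ ι y)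
    (hf : IsEmb f.toFun) {a b : X ⊕ W.obj S.carrier} (h : TermLE S.dest a b) :
    f.eval a ≤ f.eval b := by
  induction h with
  | iota hxy => exact hι _ _ hxy
  | kappa hστ => exact (hK.kappa_kappa _ _).2 (.inl ((W.map_emb _ _ hf _ _).1 hστ))
  | @sub a τ z hz _ ih =>
    have h : ∃ y ∈ W.supp (W.map f.toFun f.quasiEmb τ), f.eval a ≤ y :=
      PODilator.exists_mem_supp_map _ |>.2 ⟨z, hz, ih.trans_eq (f.elim_dest z)⟩
    rcases a with x | σ
    · exact (hK.iota_kappa x _).2 h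
    · exact (hK.kappa_kappa _ _).2 (.inr h)

/-- The extension of a `StageMap` by evaluation to the next stage. -/
def next (hW : W.IsNormal) (hK : IsKruskalFP W X Z ι κ) : StageMap (S.next hW) ι κ where
  toFun := f.eval
  quasiEmb _ _ := f.termLE_of_eval_le hK
  elim_dest
    | .inl _ => rfl
    | .inr σ => congrArg κ (W.map_map_of_comp_eq (S.isEmb_toNext hW).quasiEmb _ _ f.elim_dest σ)

variable (ι κ) in
/-- The `StageMap` on the empty stage. -/
def empty : StageMap (.empty W X) ι κ where
  toFun := PEmpty.elim
  quasiEmb z := z.elim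
  elim_dest z := z.elim

end StageMap

section TermColimit

variable {W : PODilator.{u}} {hW : W.IsNormal} {X Z Z' : POrd.{u}} {ι : X → Z}
  {κ : W.obj Z → Z} {ι' : X → Z'} {κ' : W.obj Z' → Z'}

variable (hW) in
/-- `(Z, ι, κ)` is the colimit of the finite stages, with coprojections `f n` that evaluate
terms by means of `ι` and `κ`. -/
structure IsTermColimit (ι : X → Z) (κ : W.obj Z → Z)
    (f : ∀ n, (kruskalChain hW X).obj n → Z) : Prop
    extends (kruskalChain hW X).IsColimit f where
  apply_inl : ∀ n x, f (n + 1) (.inl x) = ι x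
  apply_inr : ∀ n σ, f (n + 1) (.inr σ) = κ (W.map (f n) (isEmb n).quasiEmb σ)

variable (hW X) in
theorem exists_isTermColimit :
    ∃ (Z : POrd.{u}) (ι : X → Z) (κ : W.obj Z → Z) (f : _), IsTermColimit hW ι κ f := by
  obtain ⟨Z, f, hf⟩ := (kruskalChain hW X).exists_isColimit
  obtain ⟨κ, hκ⟩ := (hf.mapDilator (W := W)).exists_desc (g := fun n σ ↦ f (n + 1) (.inr σ))
    fun n σ ↦ hf.isCompatible (n + 1) (.inr σ)
  have hι : ∀ n x, f (n + 1) (.inl x) = f 1 (.inl x) := by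
    intro n x
    induction n with
    | zero => rfl
    | succ n ih => exact (hf.isCompatible (n + 1) (.inl x)).trans ih
  exact ⟨Z, fun x ↦ f 1 (.inl x), κ, f, hf, hι, fun n σ ↦ (hκ n σ).symm⟩

namespace IsTermColimit

variable {f : ∀ n, (kruskalChain hW X).obj n → Z}

theorem exists_map_eq (hf : IsTermColimit hW ι κ f) (τ : W.obj Z) :
    ∃ n τ₀, W.map (f n) (hf.isEmb n).quasiEmb τ₀ = τ :=
  hf.mapDilator.exists_eq τ

theorem exists_map_eq_and_map_eq (hf : IsTermColimit hW ι κ f) (σ τ : W.obj Z) :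
    ∃ n σ₀ τ₀, W.map (f n) (hf.isEmb n).quasiEmb σ₀ = σ ∧
      W.map (f n) (hf.isEmb n).quasiEmb τ₀ = τ :=
  hf.mapDilator.exists_eq_and_eq σ τ

theorem apply_le_apply_iff_termLE (hf : IsTermColimit hW ι κ f) {n : ℕ}
    {a b : X ⊕ W.obj (kruskalStage hW X n).carrier} :
    f (n + 1) a ≤ f (n + 1) b ↔ TermLE (kruskalStage hW X n).dest a b :=
  (hf.isEmb (n + 1) a b).symm

theorem exists_mem_supp_iff (hf : IsTermColimit hW ι κ f) {n : ℕ}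
    {a : X ⊕ W.obj (kruskalStage hW X n).carrier} {τ : W.obj (kruskalStage hW X n).carrier} :
    (∃ z ∈ W.supp (W.map (f n) (hf.isEmb n).quasiEmb τ), f (n + 1) a ≤ z) ↔
      ∃ z ∈ W.supp τ, TermLE (kruskalStage hW X n).dest a ((kruskalStage hW X n).dest z) := by
  rw [PODilator.exists_mem_supp_map]
  refine exists_congr fun z ↦ and_congr_right fun _ ↦ ?_
  rw [← hf.apply_le_apply_iff_termLE]
  exact (congrArg (f (n + 1) a ≤ ·) (hf.isCompatible n z)).symm.to_iff

theorem not_kappa_le_iota (hf : IsTermColimit hW ι κ f) (σ : W.obj Z) (y : X) :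
    ¬ κ σ ≤ ι y := by
  obtain ⟨n, σ, rfl⟩ := hf.exists_map_eq σ
  rw [← hf.apply_inr, ← hf.apply_inl n, hf.apply_le_apply_iff_termLE]
  exact TermLE.not_inr_inl

theorem isKruskalFP (hf : IsTermColimit hW ι κ f) : IsKruskalFP W X Z ι κ where
  range_disjoint := by
    rw [← Set.disjoint_iff_inter_eq_empty, Set.disjoint_left]
    rintro _ ⟨y, rfl⟩ ⟨σ, hσ⟩
    exact hf.not_kappa_le_iota σ y hσ.le
  iota_le x y h := by
    rw [← hf.apply_inl 0, ← hf.apply_inl 0, hf.apply_le_apply_iff_termLE] at h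
    exact TermLE.inl_inl_iff.1 h
  iota_kappa x τ := by
    obtain ⟨n, τ, rfl⟩ := hf.exists_map_eq τ
    rw [← hf.apply_inr, ← hf.apply_inl n, hf.apply_le_apply_iff_termLE, hf.exists_mem_supp_iff]
    exact TermLE.inl_inr_iff
  kappa_iota := hf.not_kappa_le_iota
  kappa_kappa σ τ := by
    obtain ⟨n, σ, τ, rfl, rfl⟩ := hf.exists_map_eq_and_map_eq σ τ
    rw [← hf.apply_inr, ← hf.apply_inr, hf.apply_le_apply_iff_termLE, hf.exists_mem_supp_iff,
      ← W.map_emb _ _ (hf.isEmb n) σ τ]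
    exact TermLE.inr_inr_iff

theorem kappa_injective (hf : IsTermColimit hW ι κ f) : Function.Injective κ := by
  intro σ τ h
  obtain ⟨n, σ, τ, rfl, rfl⟩ := hf.exists_map_eq_and_map_eq σ τ
  rw [← hf.apply_inr, ← hf.apply_inr] at h
  rw [Sum.inr_injective ((hf.isEmb (n + 1)).quasiEmb.injective h)]

theorem supp_subset_range (hf : IsTermColimit hW ι κ f) {n : ℕ} {σ : W.obj Z}
    (h : κ σ ∈ Set.range (f (n + 1))) : W.supp σ ⊆ Set.range (f n) := by
  obtain ⟨x | σ₀, hσ⟩ := h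
  · exact (hf.not_kappa_le_iota σ x (hσ.symm.trans (hf.apply_inl n x)).le).elim
  · obtain rfl := hf.kappa_injective ((hf.apply_inr n σ₀).symm.trans hσ)
    rw [W.supp_natural]
    exact Set.image_subset_range _ _

theorem kfpCondI (hf : IsTermColimit hW ι κ f) : KFPCondI W X Z ι κ where
  range_union := Set.eq_univ_of_forall fun z ↦ by
    obtain ⟨n, a, rfl⟩ := hf.exists_eq z
    rcases n with _ | n
    · exact a.elim
    · rcases a with x | σ
      · exact .inl ⟨x, (hf.apply_inl n x).symm⟩
      · exact .inr ⟨_, (hf.apply_inr n σ).symm⟩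
  iota_mono x y h := by
    rw [← hf.apply_inl 0, ← hf.apply_inl 0, hf.apply_le_apply_iff_termLE]
    exact .iota h
  height := by
    classical
    refine ⟨fun z ↦ Nat.find (hf.exists_eq z), fun s σ hs ↦ ?_⟩
    have hσ := Nat.find_spec (hf.exists_eq (κ σ))
    rcases hn : Nat.find (hf.exists_eq (κ σ)) with _ | n <;> rw [hn] at hσ
    · exact hσ.choose.elim
    · have hs_le := Nat.find_min' (hf.exists_eq s) (hf.supp_subset_range hσ hs)
      exact (Nat.lt_succ_of_le hs_le).trans_eq hn.symm

end IsTermColimit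

variable (hW) in
/-- The evaluation of the finite stages in a Kruskal fixed point. -/
def stageMap (hK : IsKruskalFP W X Z ι κ) : ∀ n, StageMap (kruskalStage hW X n) ι κ
  | 0 => .empty ι κ
  | n + 1 => (stageMap hK n).next hW hK

theorem isCompatible_stageMap (hK : IsKruskalFP W X Z ι κ) :
    (kruskalChain hW X).IsCompatible fun n ↦ (stageMap hW hK n).toFun :=
  fun n ↦ (stageMap hW hK n).elim_dest

theorem isEmb_stageMap (hK : IsKruskalFP W X Z ι κ) (hι : ∀ x y, x ≤ y → ι x ≤ ι y) (n : ℕ) :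
    IsEmb (stageMap hW hK n).toFun := by
  induction n with
  | zero => exact fun a ↦ a.elim
  | succ n ih =>
    exact fun a b ↦ ⟨(stageMap hW hK n).eval_le_of_termLE hK hι ih,
      (stageMap hW hK n).termLE_of_eval_le hK⟩

theorem KFPCondI.exists_stageMap_eq (hK : IsKruskalFP W X Z ι κ) (hC : KFPCondI W X Z ι κ)
    (z : Z) : ∃ n a, (stageMap hW hK n).toFun a = z := by
  obtain ⟨h, hh⟩ := hC.height
  induction hz : h z using Nat.strong_induction_on generalizing z with
  | _ m ih =>
    rcases hC.range_union.superset (Set.mem_univ z) with ⟨x, rfl⟩ | ⟨σ, rfl⟩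
    · exact ⟨1, .inl x, rfl⟩
    · obtain ⟨n, σ₀, rfl⟩ := POrdChain.exists_map_eq (isCompatible_stageMap (hW := hW) hK)
        (isEmb_stageMap hK hC.iota_mono) σ fun s hs ↦ ih _ (hz ▸ hh s σ hs) s rfl
      exact ⟨n + 1, .inr σ₀, rfl⟩

theorem KFPCondI.isTermColimit (hK : IsKruskalFP W X Z ι κ) (hC : KFPCondI W X Z ι κ) :
    IsTermColimit hW ι κ fun n ↦ (stageMap hW hK n).toFun where
  isEmb := isEmb_stageMap hK hC.iota_mono
  isCompatible := isCompatible_stageMap hK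
  exists_eq := hC.exists_stageMap_eq hK
  apply_inl _ _ := rfl
  apply_inr _ _ := rfl

/-- Morphisms of Kruskal fixed points, as they occur in `IsInitialKFP`. -/
def IsKFPHom (ι : X → Z) (κ : W.obj Z → Z) (ι' : X → Z') (κ' : W.obj Z' → Z')
    (k : Z → Z') : Prop :=
  ∃ hk : QuasiEmb k, k ∘ ι = ι' ∧ k ∘ κ = κ' ∘ W.map k hk

theorem IsKFPHom.id : IsKFPHom ι κ ι κ id :=
  ⟨quasiEmb_id, rfl, by rw [W.map_id]; rfl⟩

theorem IsKFPHom.comp {Z'' : POrd.{u}} {ι'' : X → Z''} {κ'' : W.obj Z'' → Z''} {k : Z → Z'}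
    {l : Z' → Z''} (hk : IsKFPHom ι κ ι' κ' k) (hl : IsKFPHom ι' κ' ι'' κ'' l) :
    IsKFPHom ι κ ι'' κ'' (l ∘ k) := by
  obtain ⟨hk, rfl, hκ⟩ := hk
  obtain ⟨hl, rfl, hκ'⟩ := hl
  refine ⟨hk.comp hl, rfl, ?_⟩
  rw [Function.comp_assoc, hκ, ← Function.comp_assoc, hκ', W.map_comp, Function.comp_assoc]

namespace IsTermColimit

variable {f : ∀ n, (kruskalChain hW X).obj n → Z}

theorem exists_isKFPHom (hf : IsTermColimit hW ι κ f) (hK' : IsKruskalFP W X Z' ι' κ') :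
    ∃ k, IsKFPHom ι κ ι' κ' k := by
  obtain ⟨k, hk⟩ := hf.exists_desc (isCompatible_stageMap hK')
  have hk_quasiEmb : QuasiEmb k := hf.quasiEmb_of_forall fun n ↦ by
    simpa only [hk] using (stageMap hW hK' n).quasiEmb
  refine ⟨k, hk_quasiEmb, funext fun x ↦ ?_, funext fun σ ↦ ?_⟩
  · rw [Function.comp_apply, ← hf.apply_inl 0]
    exact hk 1 (.inl x)
  · obtain ⟨n, σ, rfl⟩ := hf.exists_map_eq σ
    rw [Function.comp_apply, ← hf.apply_inr, Function.comp_apply,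
      W.map_map_of_comp_eq _ _ (stageMap hW hK' n).quasiEmb (hk n)]
    exact hk (n + 1) (.inr σ)

theorem apply_eq_stageMap (hf : IsTermColimit hW ι κ f) (hK' : IsKruskalFP W X Z' ι' κ')
    {k : Z → Z'} (hk : IsKFPHom ι κ ι' κ' k) (n : ℕ) (a : (kruskalChain hW X).obj n) :
    k (f n a) = (stageMap hW hK' n).toFun a := by
  obtain ⟨hk, hι, hκ⟩ := hk
  induction n with
  | zero => exact a.elim
  | succ n ih =>
    rcases a with x | σ
    · rw [hf.apply_inl]
      exact congrFun hι x
    · rw [hf.apply_inr]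
      exact (congrFun hκ _).trans (congrArg κ' (W.map_map_of_comp_eq _ _ _ ih σ))

theorem isInitialKFP (hf : IsTermColimit hW ι κ f) : IsInitialKFP W X Z ι κ := by
  refine ⟨hf.isKruskalFP, fun Z' ι' κ' hK' ↦ ?_⟩
  obtain ⟨k, hk⟩ := hf.exists_isKFPHom hK'
  refine ⟨k, hk, fun l hl ↦ funext fun z ↦ ?_⟩
  obtain ⟨n, a, rfl⟩ := hf.exists_eq z
  rw [hf.apply_eq_stageMap hK' hl, hf.apply_eq_stageMap hK' hk]

end IsTermColimit

theorem KFPCondI.of_retract {f : Z → Z'} {g : Z' → Z} (hC : KFPCondI W X Z' ι' κ')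
    (hf : IsKFPHom ι κ ι' κ' f) (hg : IsKFPHom ι' κ' ι κ g) (hgf : g ∘ f = id) :
    KFPCondI W X Z ι κ where
  range_union := Set.eq_univ_of_forall fun z ↦ by
    obtain ⟨hg, hι, hκ⟩ := hg
    have hz : g (f z) = z := congrFun hgf z
    rcases hC.range_union.superset (Set.mem_univ (f z)) with ⟨x, hx⟩ | ⟨σ, hσ⟩
    · exact .inl ⟨x, (congrFun hι x).symm.trans ((congrArg g hx).trans hz)⟩
    · exact .inr ⟨W.map g hg σ, (congrFun hκ σ).symm.trans ((congrArg g hσ).trans hz)⟩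
  iota_mono x y h := by
    obtain ⟨hf, rfl, -⟩ := hf
    exact hf _ _ (hC.iota_mono x y h)
  height := by
    obtain ⟨hf, -, hκ⟩ := hf
    obtain ⟨h, hh⟩ := hC.height
    refine ⟨h ∘ f, fun s σ hs ↦ ?_⟩
    have hfs : f s ∈ W.supp (W.map f hf σ) :=
      (W.supp_natural f hf σ).superset (Set.mem_image_of_mem f hs)
    exact (hh _ _ hfs).trans_eq (congrArg h (congrFun hκ σ).symm)

end TermColimit

/-- A Kruskal fixed point satisfies condition (i) iff it is initial. -/
theorem kruskalFP_condI_iff_initial (W : PODilator.{u}) (hW : W.IsNormal)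
    (X Z : POrd.{u}) (ι : X → Z) (κ : W.obj Z → Z)
    (hK : IsKruskalFP W X Z ι κ) :
    KFPCondI W X Z ι κ ↔ IsInitialKFP W X Z ι κ := by
  refine ⟨fun hC ↦ (hC.isTermColimit (hW := hW) hK).isInitialKFP, fun ⟨_, hZ⟩ ↦ ?_⟩
  obtain ⟨Z₀, ι₀, κ₀, f, hf⟩ := exists_isTermColimit hW X
  obtain ⟨k, hk, -⟩ := hZ Z₀ ι₀ κ₀ hf.isKruskalFP
  obtain ⟨l, hl⟩ := hf.exists_isKFPHom hK
  have hlk : l ∘ k = id := (hZ Z ι κ hK).unique (IsKFPHom.comp hk hl) IsKFPHom.id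
  exact hf.kfpCondI.of_retract hk hl hlk
end

section
/- For every normal PO-dilator W and every partial order X there exists an initial Kruskal fixed point of W over X. -/
universe u

theorem PODilator.map_map (W : PODilator.{u}) {A B C : POrd.{u}} {f : A → B} {g : B → C}
    {k : A → C} (hf : QuasiEmb f) (hg : QuasiEmb g) (hk : QuasiEmb k) (h : ∀ a, g (f a) = k a)
    (σ : W.obj A) : W.map g hg (W.map f hf σ) = W.map k hk σ := by
  obtain rfl : g ∘ f = k := funext h
  exact (congrFun (W.map_comp f g hf hg) σ).symm

/-! ### Unions of chains -/

section DirectLimit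

variable {ι : Type*} [Preorder ι] [IsDirectedOrder ι] {F : ι → Type*} [∀ i, PartialOrder (F i)]
  (f : ∀ i j, i ≤ j → F i ↪o F j) [DirectedSystem F (f · · ·)]

/-- The order on the union of a directed system of order embeddings. It is not an instance, because
`DirectLimit` unfolds to a quotient, on which Mathlib already has an instance of `LE`. -/
noncomputable abbrev directLimitOrder : PartialOrder (DirectLimit F f) where
  le := DirectLimit.lift₂ f f (fun _ x y => x ≤ y)
    fun i j h _ _ => propext (f i j h).le_iff_le.symm
  lt := DirectLimit.lift₂ f f (fun _ x y => x < y)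
    fun i j h _ _ => propext (f i j h).lt_iff_lt.symm
  le_refl := DirectLimit.induction f fun i x => by
    rw [DirectLimit.lift₂_def]
  le_trans := DirectLimit.induction₃ f fun i x y z => by
    simpa only [DirectLimit.lift₂_def] using le_trans
  lt_iff_le_not_ge := DirectLimit.induction₂ f fun i x y => by
    simpa only [DirectLimit.lift₂_def] using lt_iff_le_not_ge
  le_antisymm := DirectLimit.induction₂ f fun i x y hxy hyx => by
    rw [DirectLimit.lift₂_def] at hxy hyx
    rw [le_antisymm hxy hyx]

theorem directLimitOrder_mk_le_mk {i : ι} (x y : F i) :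
    (directLimitOrder f).le ⟦⟨i, x⟩⟧ ⟦⟨i, y⟩⟧ ↔ x ≤ y :=
  (DirectLimit.lift₂_def f f (fun _ x y => x ≤ y) _ i x y).to_iff

end DirectLimit

section TransitionEmb

variable {F : ℕ → Type*} [∀ n, PartialOrder (F n)] (e : ∀ n, F n ↪o F (n + 1))

/-- The composite `e (m - 1) ∘ ⋯ ∘ e n` of consecutive members of a chain of order embeddings. -/
def transitionEmb (n m : ℕ) (h : n ≤ m) : F n ↪o F m :=
  Nat.leRecOn (C := fun k => F n ↪o F k) h (fun {k} g => g.trans (e k)) (RelEmbedding.refl _)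

theorem transitionEmb_self (n : ℕ) (x : F n) : transitionEmb e n n le_rfl x = x := by
  rw [transitionEmb, Nat.leRecOn_self]; rfl

theorem transitionEmb_succ {n m : ℕ} (h : n ≤ m) (x : F n) :
    transitionEmb e n (m + 1) (Nat.le_succ_of_le h) x = e m (transitionEmb e n m h x) := by
  rw [transitionEmb, Nat.leRecOn_succ h]; rfl

instance transitionEmb_directedSystem : DirectedSystem F (transitionEmb e · · ·) where
  map_self n x := transitionEmb_self e n x
  map_map k m n hnm hmk x := by
    induction k, hmk using Nat.le_induction with
    | base => exact transitionEmb_self e m _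
    | succ k hmk ih => rw [transitionEmb_succ e hmk, ih, transitionEmb_succ]

end TransitionEmb

/-- `L` is the union of the chain `e n : Z n → Z (n + 1)`, in the sense that the `j n` form a cocone
of embeddings that jointly cover `L`. -/
structure IsChainUnion {Z : ℕ → POrd.{u}} {L : POrd.{u}} (e : ∀ n, Z n → Z (n + 1))
    (j : ∀ n, Z n → L) : Prop where
  isEmb : ∀ n, IsEmb (j n)
  comm : ∀ n a, j (n + 1) (e n a) = j n a
  exists_eq : ∀ z, ∃ n a, j n a = z

theorem exists_isChainUnion {Z : ℕ → POrd.{u}} (e : ∀ n, Z n → Z (n + 1)) (he : ∀ n, IsEmb (e n)) :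
    ∃ (L : POrd.{u}) (j : ∀ n, Z n → L), IsChainUnion e j := by
  let e' (n : ℕ) : Z n ↪o Z (n + 1) := OrderEmbedding.ofMapLEIff (e n) fun a b => (he n a b).symm
  refine ⟨@POrd.mk _ (directLimitOrder (transitionEmb e')), fun n a => ⟦⟨n, a⟩⟧, ?_, ?_, ?_⟩
  · exact fun n a b => (directLimitOrder_mk_le_mk (transitionEmb e') a b).symm
  · intro n a
    have h : transitionEmb e' n (n + 1) n.le_succ a = e n a := by
      rw [transitionEmb_succ e' le_rfl, transitionEmb_self]; rfl
    rw [← h]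
    exact DirectLimit.mk_apply (f := transitionEmb e') n (n + 1) a n.le_succ
  · intro z
    obtain ⟨n, a, rfl⟩ := DirectLimit.exists_eq_mk (transitionEmb e') z
    exact ⟨n, a, rfl⟩

namespace IsChainUnion

variable {Z : ℕ → POrd.{u}} {L : POrd.{u}} {e : ∀ n, Z n → Z (n + 1)} {j : ∀ n, Z n → L}

theorem quasiEmb (h : IsChainUnion e j) (n : ℕ) : QuasiEmb (j n) := (h.isEmb n).quasiEmb

theorem range_monotone (h : IsChainUnion e j) : Monotone fun n => Set.range (j n) :=
  monotone_nat_of_le_succ fun n => by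
    rintro _ ⟨a, rfl⟩
    exact ⟨e n a, h.comm n a⟩

theorem exists_finite_subset_range (h : IsChainUnion e j) {s : Set L} (hs : s.Finite) :
    ∃ n, s ⊆ Set.range (j n) := by
  choose n a hna using h.exists_eq
  obtain ⟨N, hN⟩ := (hs.image n).bddAbove
  exact ⟨N, fun z hz => h.range_monotone (hN ⟨z, hz, rfl⟩) ⟨a z, hna z⟩⟩

theorem exists_eq₂ (h : IsChainUnion e j) (z w : L) : ∃ n a b, j n a = z ∧ j n b = w := by
  obtain ⟨n, hn⟩ := h.exists_finite_subset_range (Set.toFinite {z, w})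
  obtain ⟨⟨a, ha⟩, ⟨b, hb⟩⟩ := Set.pair_subset_iff.1 hn
  exact ⟨n, a, b, ha, hb⟩

theorem exists_lift (h : IsChainUnion e j) {Y : Type*} (g : ∀ n, Z n → Y)
    (hg : ∀ n a, g (n + 1) (e n a) = g n a) : ∃ f : L → Y, ∀ n a, f (j n a) = g n a := by
  have push {n m : ℕ} (hnm : n ≤ m) (a : Z n) : ∃ b, j m b = j n a ∧ g m b = g n a := by
    induction m, hnm using Nat.le_induction with
    | base => exact ⟨a, rfl, rfl⟩
    | succ m _ ih =>
      obtain ⟨b, hj, hb⟩ := ih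
      exact ⟨e m b, (h.comm m b).trans hj, (hg m b).trans hb⟩
  have compatible {n m : ℕ} {a : Z n} {b : Z m} (hab : j n a = j m b) : g n a = g m b := by
    obtain ⟨a', hja, hga⟩ := push (le_max_left n m) a
    obtain ⟨b', hjb, hgb⟩ := push (le_max_right n m) b
    obtain rfl : a' = b' := (h.quasiEmb _).injective (hja.trans (hab.trans hjb.symm))
    exact hga.symm.trans hgb
  choose n a hna using h.exists_eq
  exact ⟨fun z => g (n z) (a z), fun m b => compatible (hna _)⟩

theorem quasiEmb_of_comp (h : IsChainUnion e j) {Y : Type*} [PartialOrder Y] {f : L → Y}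
    (hf : ∀ n, QuasiEmb fun a => f (j n a)) : QuasiEmb f := by
  intro z w hzw
  obtain ⟨n, a, b, rfl, rfl⟩ := h.exists_eq₂ z w
  exact (h.isEmb n a b).1 (hf n a b hzw)

theorem map (h : IsChainUnion e j) (W : PODilator.{u}) (he : ∀ n, QuasiEmb (e n)) :
    IsChainUnion (fun n => W.map (e n) (he n)) (fun n => W.map (j n) (h.quasiEmb n)) where
  isEmb n := W.map_emb _ _ (h.isEmb n)
  comm n := W.map_map _ _ _ (h.comm n)
  exists_eq σ := by
    obtain ⟨n, hn⟩ := h.exists_finite_subset_range (W.supp_finite σ)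
    exact ⟨n, W.supp_cond _ _ (h.isEmb n) σ hn⟩

end IsChainUnion

/-! ### The Kruskal order on `W Z` -/

/-- The relation on `W.obj Z` generated by its own order and by the rule that everything below
`d v` is below `t` when `v` is in the support of `t`; the map `d` decomposes the elements of `Z`. -/
inductive PODilator.KruskalLE (W : PODilator.{u}) {Z : POrd.{u}} (d : Z → W.obj Z)
    (s : W.obj Z) : W.obj Z → Prop
  | of_le {t : W.obj Z} (h : s ≤ t) : W.KruskalLE d s t
  | of_mem_supp {t : W.obj Z} {v : Z} (hv : v ∈ W.supp t) (h : W.KruskalLE d s (d v)) :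
    W.KruskalLE d s t

namespace PODilator.KruskalLE

variable {W : PODilator.{u}} {Y Z : POrd.{u}} {d : Z → W.obj Z} {r s t : W.obj Z}

theorem iff_le_or_exists :
    W.KruskalLE d s t ↔ s ≤ t ∨ ∃ v ∈ W.supp t, W.KruskalLE d s (d v) where
  mp
    | of_le h => .inl h
    | of_mem_supp hv h => .inr ⟨_, hv, h⟩
  mpr
    | .inl h => of_le h
    | .inr ⟨_, hv, h⟩ => of_mem_supp hv h

theorem trans (hW : W.IsNormal) (hd : ∀ u v, u ≤ v → W.KruskalLE d (d u) (d v))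
    (hrs : W.KruskalLE d r s) (hst : W.KruskalLE d s t) : W.KruskalLE d r t := by
  induction hrs generalizing t with
  | of_le hrs =>
    induction hst with
    | of_le hst => exact of_le (hrs.trans hst)
    | of_mem_supp hv _ ih => exact of_mem_supp hv ih
  | of_mem_supp hu _ ih_r =>
    induction hst with
    | of_le hst =>
      obtain ⟨u', hu', huu'⟩ := hW _ _ _ hst _ hu
      exact of_mem_supp hu' (ih_r (hd _ _ huu'))
    | of_mem_supp hv _ ih => exact of_mem_supp hv ih

theorem map_iff {c : Y → W.obj Y} {g : Z → Y} (hg : IsEmb g)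
    (hgc : ∀ z, c (g z) = W.map g hg.quasiEmb (d z)) :
    W.KruskalLE c (W.map g hg.quasiEmb s) (W.map g hg.quasiEmb t) ↔ W.KruskalLE d s t := by
  constructor
  · generalize ht' : W.map g hg.quasiEmb t = t'
    intro h
    induction h generalizing t with subst ht'
    | of_le h => exact of_le ((W.map_emb _ _ hg _ _).2 h)
    | of_mem_supp hv _ ih =>
      rw [W.supp_natural] at hv
      obtain ⟨v, hv, rfl⟩ := hv
      exact of_mem_supp hv (ih (hgc v).symm)
  · intro h
    induction h with
    | of_le h => exact of_le ((W.map_emb _ _ hg _ _).1 h)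
    | of_mem_supp hv _ ih =>
      refine of_mem_supp (W.supp_natural g _ _ ▸ Set.mem_image_of_mem g hv) ?_
      rwa [hgc]

end PODilator.KruskalLE

/-- A well-founded Kruskal coalgebra: each element is decomposed by `dest`, and the order is the one
which the Kruskal rule prescribes for the decomposed elements. These are the approximations
to the initial Kruskal algebra. -/
structure KruskalCoalg (W : PODilator.{u}) : Type (u + 1) where
  carrier : POrd.{u}
  dest : carrier → W.obj carrier
  le_iff : ∀ z w, z ≤ w ↔ W.KruskalLE dest (dest z) (dest w)
  wf : WellFounded fun v w => v ∈ W.supp (dest w)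

namespace KruskalCoalg

variable {W : PODilator.{u}} (T : KruskalCoalg W)

theorem kruskalLE_trans (hW : W.IsNormal) {r s t : W.obj T.carrier}
    (hrs : W.KruskalLE T.dest r s) (hst : W.KruskalLE T.dest s t) : W.KruskalLE T.dest r t :=
  hrs.trans hW (fun _ _ => (T.le_iff _ _).1) hst

theorem not_kruskalLE_of_mem_supp (hW : W.IsNormal) {u : T.carrier} {t : W.obj T.carrier}
    (hu : u ∈ W.supp t) : ¬ W.KruskalLE T.dest t (T.dest u) := by
  induction u using T.wf.induction generalizing t with
  | _ u ih =>
    intro h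
    rcases PODilator.KruskalLE.iff_le_or_exists.1 h with h | ⟨v, hv, h⟩
    · obtain ⟨u', hu', huu'⟩ := hW _ _ _ h u hu
      exact ih u' hu' hu' ((T.le_iff _ _).1 huu')
    · have h_ut : W.KruskalLE T.dest (T.dest u) t := .of_mem_supp hu (.of_le le_rfl)
      exact ih v hv hv (T.kruskalLE_trans hW h_ut h)

theorem kruskalLE_antisymm (hW : W.IsNormal) {s t : W.obj T.carrier}
    (hst : W.KruskalLE T.dest s t) (hts : W.KruskalLE T.dest t s) : s = t := by
  rcases PODilator.KruskalLE.iff_le_or_exists.1 hst with hst' | ⟨v, hv, hsv⟩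
  · rcases PODilator.KruskalLE.iff_le_or_exists.1 hts with hts' | ⟨v, hv, htv⟩
    · exact le_antisymm hst' hts'
    · exact (T.not_kruskalLE_of_mem_supp hW hv (T.kruskalLE_trans hW hst htv)).elim
  · exact (T.not_kruskalLE_of_mem_supp hW hv (T.kruskalLE_trans hW hts hsv)).elim

/-- The Kruskal order on `W.obj T.carrier`, which extends the order of `T.carrier` along `dest`. -/
def stepOrd (hW : W.IsNormal) : POrd.{u} where
  carrier := W.obj T.carrier
  str :=
    { le := W.KruskalLE T.dest
      lt := fun s t => W.KruskalLE T.dest s t ∧ ¬ W.KruskalLE T.dest t s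
      le_refl := fun _ => .of_le le_rfl
      le_trans := fun _ _ _ => T.kruskalLE_trans hW
      lt_iff_le_not_ge := fun _ _ => Iff.rfl
      le_antisymm := fun _ _ => T.kruskalLE_antisymm hW }

/-- The decomposition map, as a map into the Kruskal order on `W.obj T.carrier`. -/
def unit (hW : W.IsNormal) : T.carrier → T.stepOrd hW := T.dest

theorem isEmb_unit (hW : W.IsNormal) : IsEmb (T.unit hW) := T.le_iff

theorem wellFounded_image_supp :
    WellFounded fun s t : W.obj T.carrier => s ∈ T.dest '' W.supp t := by
  have acc_dest (w : T.carrier) :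
      Acc (fun s t : W.obj T.carrier => s ∈ T.dest '' W.supp t) (T.dest w) := by
    induction w using T.wf.induction with
    | _ w ih =>
      constructor
      rintro _ ⟨v, hv, rfl⟩
      exact ih v hv
  exact ⟨fun t => ⟨t, by rintro _ ⟨v, -, rfl⟩; exact acc_dest v⟩⟩

/-- The Kruskal coalgebra on `W.obj T.carrier`. -/
def step (hW : W.IsNormal) : KruskalCoalg W where
  carrier := T.stepOrd hW
  dest := W.map (T.unit hW) (T.isEmb_unit hW).quasiEmb
  le_iff _ _ := (PODilator.KruskalLE.map_iff (T.isEmb_unit hW) fun _ => rfl).symm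
  wf := Subrelation.wf
    (fun {_ t} h => W.supp_natural (T.unit hW) (T.isEmb_unit hW).quasiEmb t ▸ h)
    T.wellFounded_image_supp

/-- The empty Kruskal coalgebra. -/
def empty (W : PODilator.{u}) : KruskalCoalg W where
  carrier := ⟨PEmpty⟩
  dest := PEmpty.elim
  le_iff z := z.elim
  wf := ⟨PEmpty.rec⟩

/-- The iterates of the Kruskal construction, with carriers `∅`, `W ∅`, `W (W ∅)`, …. -/
def chain (hW : W.IsNormal) : ℕ → KruskalCoalg W
  | 0 => empty W
  | n + 1 => (chain hW n).step hW

/-- The embedding of one iterate into the next. -/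
def chainMap (hW : W.IsNormal) (n : ℕ) : (chain hW n).carrier → (chain hW (n + 1)).carrier :=
  (chain hW n).unit hW

theorem isEmb_chainMap (hW : W.IsNormal) (n : ℕ) : IsEmb (chainMap hW n) :=
  (chain hW n).isEmb_unit hW

end KruskalCoalg

/-- The reflecting half of the Kruskal rule. It suffices for the targets of an initial algebra, and
for the generators of a Kruskal fixed point the other half may fail. -/
def ReflectsKruskal (W : PODilator.{u}) {Z : POrd.{u}} (κ : W.obj Z → Z) : Prop :=
  ∀ σ τ, κ σ ≤ κ τ → σ ≤ τ ∨ ∃ z ∈ W.supp τ, κ σ ≤ z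

/-- A Kruskal fixed point without generators. -/
def IsKruskalAlg (W : PODilator.{u}) {Z : POrd.{u}} (κ : W.obj Z → Z) : Prop :=
  ∀ σ τ, κ σ ≤ κ τ ↔ σ ≤ τ ∨ ∃ z ∈ W.supp τ, κ σ ≤ z

/-- A quasi embedding of a Kruskal coalgebra into an algebra `κ` that turns the decomposition of an
element into the corresponding application of `κ`. -/
structure KruskalCoalg.Hom {W : PODilator.{u}} (T : KruskalCoalg W) {Z : POrd.{u}}
    (κ : W.obj Z → Z) where
  toFun : T.carrier → Z
  quasiEmb : QuasiEmb toFun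
  eq_apply_map_dest : ∀ z, toFun z = κ (W.map toFun quasiEmb (T.dest z))

namespace KruskalCoalg.Hom

variable {W : PODilator.{u}} {Z : POrd.{u}} {κ : W.obj Z → Z}

theorem quasiEmb_step {T : KruskalCoalg W} (hW : W.IsNormal) (hκ : ReflectsKruskal W κ)
    (f : T.Hom κ) :
    QuasiEmb fun s : T.stepOrd hW => κ (W.map f.toFun f.quasiEmb s) := by
  intro s t h
  induction t using T.wellFounded_image_supp.induction with
  | _ t ih =>
    rcases hκ _ _ h with h | ⟨z, hz, h⟩
    · exact .of_le (W.map_quasiEmb _ _ _ _ h)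
    · rw [W.supp_natural] at hz
      obtain ⟨v, hv, rfl⟩ := hz
      rw [f.eq_apply_map_dest v] at h
      exact .of_mem_supp hv (ih _ ⟨v, hv, rfl⟩ h)

/-- The extension of a map into an algebra to the next iterate. -/
def step {T : KruskalCoalg W} (hW : W.IsNormal) (hκ : ReflectsKruskal W κ) (f : T.Hom κ) :
    (T.step hW).Hom κ where
  toFun s := κ (W.map f.toFun f.quasiEmb s)
  quasiEmb := f.quasiEmb_step hW hκ
  eq_apply_map_dest s :=
    congrArg κ (W.map_map (f := T.unit hW) (T.isEmb_unit hW).quasiEmb (f.quasiEmb_step hW hκ) _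
      (fun z => (f.eq_apply_map_dest z).symm) s).symm

/-- The empty map into an algebra. -/
def empty (κ : W.obj Z → Z) : (KruskalCoalg.empty W).Hom κ where
  toFun := PEmpty.elim
  quasiEmb z := z.elim
  eq_apply_map_dest z := z.elim

/-- The maps from the iterates of the Kruskal construction into an algebra. -/
def chain (hW : W.IsNormal) (hκ : ReflectsKruskal W κ) :
    ∀ n, (KruskalCoalg.chain hW n).Hom κ
  | 0 => empty κ
  | n + 1 => (chain hW hκ n).step hW hκ

theorem chain_chainMap (hW : W.IsNormal) (hκ : ReflectsKruskal W κ) (n : ℕ)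
    (a : (KruskalCoalg.chain hW n).carrier) :
    (chain hW hκ (n + 1)).toFun (chainMap hW n a) = (chain hW hκ n).toFun a :=
  ((chain hW hκ n).eq_apply_map_dest a).symm

end KruskalCoalg.Hom

/-! ### The initial Kruskal algebra -/

namespace IsChainUnion

open KruskalCoalg

variable {W : PODilator.{u}} {hW : W.IsNormal} {L : POrd.{u}}
  {j : ∀ n, (chain hW n).carrier → L}

theorem exists_alg (h : IsChainUnion (chainMap hW) j) :
    ∃ κ : W.obj L → L, ∀ (n : ℕ) (s : W.obj (chain hW n).carrier),
      κ (W.map (j n) (h.quasiEmb n) s) = j (n + 1) s :=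
  (h.map W fun n => (isEmb_chainMap hW n).quasiEmb).exists_lift
    (fun n (s : W.obj (chain hW n).carrier) => j (n + 1) s) fun n s => h.comm (n + 1) s

variable {κ : W.obj L → L}

theorem isKruskalAlg (h : IsChainUnion (chainMap hW) j)
    (hκ : ∀ (n : ℕ) (s : W.obj (chain hW n).carrier),
      κ (W.map (j n) (h.quasiEmb n) s) = j (n + 1) s) :
    IsKruskalAlg W κ := by
  intro σ τ
  obtain ⟨n, s, t, rfl, rfl⟩ :=
    (h.map W fun n => (isEmb_chainMap hW n).quasiEmb).exists_eq₂ σ τ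
  have apply_le (v : (chain hW n).carrier) :
      κ (W.map (j n) (h.quasiEmb n) s) ≤ j n v ↔
        W.KruskalLE (chain hW n).dest s ((chain hW n).dest v) := by
    rw [hκ, ← h.comm n v]
    exact (h.isEmb (n + 1) _ _).symm
  calc κ (W.map (j n) _ s) ≤ κ (W.map (j n) _ t)
      ↔ W.KruskalLE (chain hW n).dest s t := by
        rw [hκ, hκ]
        exact (h.isEmb (n + 1) _ _).symm
    _ ↔ s ≤ t ∨ ∃ v ∈ W.supp t, W.KruskalLE (chain hW n).dest s ((chain hW n).dest v) :=
        PODilator.KruskalLE.iff_le_or_exists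
    _ ↔ _ := by
        rw [W.supp_natural, Set.exists_mem_image, ← W.map_emb _ _ (h.isEmb n)]
        simp only [apply_le]

theorem exists_hom (h : IsChainUnion (chainMap hW) j)
    (hκ : ∀ (n : ℕ) (s : W.obj (chain hW n).carrier),
      κ (W.map (j n) (h.quasiEmb n) s) = j (n + 1) s)
    {Z : POrd.{u}} {κ' : W.obj Z → Z} (hκ' : ReflectsKruskal W κ') :
    ∃ f : L → Z, ∃ hf : QuasiEmb f, f ∘ κ = κ' ∘ W.map f hf := by
  obtain ⟨f, hf⟩ := h.exists_lift (fun n => (Hom.chain hW hκ' n).toFun) (Hom.chain_chainMap hW hκ')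
  have hfq : QuasiEmb f := h.quasiEmb_of_comp fun n => by
    simpa only [hf] using (Hom.chain hW hκ' n).quasiEmb
  refine ⟨f, hfq, funext fun σ => ?_⟩
  obtain ⟨n, s, rfl⟩ := (h.map W fun n => (isEmb_chainMap hW n).quasiEmb).exists_eq σ
  calc f (κ (W.map (j n) _ s)) = f (j (n + 1) s) := congrArg f (hκ n s)
    _ = κ' (W.map (Hom.chain hW hκ' n).toFun _ s) := hf (n + 1) s
    _ = κ' (W.map f hfq (W.map (j n) _ s)) :=
      congrArg κ' (W.map_map _ _ _ (hf n) s).symm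

theorem hom_unique (h : IsChainUnion (chainMap hW) j)
    (hκ : ∀ (n : ℕ) (s : W.obj (chain hW n).carrier),
      κ (W.map (j n) (h.quasiEmb n) s) = j (n + 1) s)
    {Z : POrd.{u}} {κ' : W.obj Z → Z} {f g : L → Z} (hf : QuasiEmb f) (hg : QuasiEmb g)
    (hfκ : f ∘ κ = κ' ∘ W.map f hf) (hgκ : g ∘ κ = κ' ∘ W.map g hg) : f = g := by
  have eq_on_chain (n : ℕ) : f ∘ j n = g ∘ j n := by
    induction n with
    | zero => exact funext fun a => PEmpty.elim a
    | succ n ih =>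
      funext s
      calc f (j (n + 1) s) = f (κ (W.map (j n) (h.quasiEmb n) s)) := congrArg f (hκ n s).symm
        _ = κ' (W.map f hf (W.map (j n) (h.quasiEmb n) s)) := congrFun hfκ _
        _ = κ' (W.map g hg (W.map (j n) (h.quasiEmb n) s)) :=
          congrArg κ' <|
            (W.map_map (h.quasiEmb n) hf ((h.quasiEmb n).comp hg) (congrFun ih) s).trans
              (W.map_map (h.quasiEmb n) hg _ (fun _ => rfl) s).symm
        _ = g (κ (W.map (j n) (h.quasiEmb n) s)) := (congrFun hgκ _).symm
        _ = g (j (n + 1) s) := congrArg g (hκ n s)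
  funext z
  obtain ⟨n, a, rfl⟩ := h.exists_eq z
  exact congrFun (eq_on_chain n) a

end IsChainUnion

theorem exists_initial_kruskalAlg {W : PODilator.{u}} (hW : W.IsNormal) :
    ∃ (Z : POrd.{u}) (κ : W.obj Z → Z), IsKruskalAlg W κ ∧
      ∀ (Z' : POrd.{u}) (κ' : W.obj Z' → Z'), ReflectsKruskal W κ' →
        ∃! f : Z → Z', ∃ hf : QuasiEmb f, f ∘ κ = κ' ∘ W.map f hf := by
  obtain ⟨L, j, h⟩ := exists_isChainUnion _ (KruskalCoalg.isEmb_chainMap hW)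
  obtain ⟨κ, hκ⟩ := h.exists_alg
  refine ⟨L, κ, h.isKruskalAlg hκ, fun Z' κ' hκ' => ?_⟩
  obtain ⟨f, hf, hfκ⟩ := h.exists_hom hκ hκ'
  exact ⟨f, ⟨hf, hfκ⟩, fun g ⟨hg, hgκ⟩ => h.hom_unique hκ hg hf hgκ hfκ⟩

/-! ### Generators -/

/-- The PO-dilator `Z ↦ X ⊕ W Z`, which absorbs the generators of Kruskal fixed points over `X`. -/
def PODilator.constSum_s3 (W : PODilator.{u}) (X : POrd.{u}) : PODilator.{u} where
  obj Z := ⟨X ⊕ W.obj Z⟩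
  map f hf := Sum.map id (W.map f hf)
  supp := Sum.elim (fun _ => ∅) W.supp
  map_quasiEmb f hf := by
    rintro (x | σ) (y | τ) h
    · exact Sum.inl_le_inl_iff.2 (Sum.inl_le_inl_iff.1 h)
    · exact (Sum.not_inl_le_inr h).elim
    · exact (Sum.not_inr_le_inl h).elim
    · exact Sum.inr_le_inr_iff.2 (W.map_quasiEmb f hf _ _ (Sum.inr_le_inr_iff.1 h))
  map_id Z := by rw [W.map_id, Sum.map_id_id]
  map_comp f g hf hg := by rw [W.map_comp, Sum.map_comp_map, Function.id_comp]
  map_emb f hf hfe := by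
    rintro (x | σ) (y | τ)
    · exact Sum.inl_le_inl_iff.trans Sum.inl_le_inl_iff.symm
    · exact iff_of_false Sum.not_inl_le_inr Sum.not_inl_le_inr
    · exact iff_of_false Sum.not_inr_le_inl Sum.not_inr_le_inl
    · exact Sum.inr_le_inr_iff.trans ((W.map_emb f hf hfe σ τ).trans Sum.inr_le_inr_iff.symm)
  supp_finite := by
    rintro _ (_ | σ)
    · exact Set.finite_empty
    · exact W.supp_finite σ
  supp_natural f hf := by
    rintro (_ | σ)
    · exact (Set.image_empty f).symm
    · exact W.supp_natural f hf σ
  supp_cond f hf hfe := by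
    rintro (x | σ) hσ
    · exact ⟨.inl x, rfl⟩
    · obtain ⟨τ, rfl⟩ := W.supp_cond f hf hfe σ hσ
      exact ⟨.inr τ, rfl⟩

section ConstSum

variable {W : PODilator.{u}} {X Z Z' : POrd.{u}}

theorem PODilator.IsNormal.constSum_s3 (hW : W.IsNormal) (X : POrd.{u}) :
    (W.constSum_s3 X).IsNormal := by
  rintro Z (x | σ) (y | τ) h
  · exact fun _ hx => hx.elim
  · exact fun _ hx => hx.elim
  · exact (Sum.not_inr_le_inl h).elim
  · exact hW Z σ τ (Sum.inr_le_inr_iff.1 h)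

theorem IsKruskalAlg.isKruskalFP {κ : (W.constSum_s3 X).obj Z → Z}
    (hκ : IsKruskalAlg (W.constSum_s3 X) κ) : IsKruskalFP W X Z (κ ∘ Sum.inl) (κ ∘ Sum.inr) := by
  have kappa_iota (σ : W.obj Z) (y : X) : ¬ κ (.inr σ) ≤ κ (.inl y) := fun h =>
    ((hκ _ _).1 h).elim Sum.not_inr_le_inl fun ⟨_, hz, _⟩ => hz
  refine ⟨?_, fun x y h => ?_, fun x τ => ?_, kappa_iota, fun σ τ => ?_⟩
  · refine Set.disjoint_iff_inter_eq_empty.1 (Set.disjoint_left.2 ?_)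
    rintro _ ⟨x, rfl⟩ ⟨σ, hσ⟩
    exact kappa_iota σ x hσ.le
  · exact ((hκ _ _).1 h).elim Sum.inl_le_inl_iff.1 fun ⟨_, hz, _⟩ => hz.elim
  · exact (hκ _ _).trans (or_iff_right Sum.not_inl_le_inr)
  · exact (hκ _ _).trans (or_congr_left Sum.inr_le_inr_iff)

theorem IsKruskalFP.reflectsKruskal {ι : X → Z} {κ : W.obj Z → Z} (h : IsKruskalFP W X Z ι κ) :
    ReflectsKruskal (W.constSum_s3 X) (Sum.elim ι κ) := by
  rintro (x | σ) (y | τ) hle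
  · exact .inl (Sum.inl_le_inl_iff.2 (h.iota_le x y hle))
  · exact .inr ((h.iota_kappa x τ).1 hle)
  · exact (h.kappa_iota σ y hle).elim
  · exact ((h.kappa_kappa σ τ).1 hle).imp_left Sum.inr_le_inr_iff.2

theorem comp_eq_sumElim_comp_map_iff {κ : (W.constSum_s3 X).obj Z → Z} {ι' : X → Z'}
    {κ' : W.obj Z' → Z'} {f : Z → Z'} (hf : QuasiEmb f) :
    f ∘ κ = Sum.elim ι' κ' ∘ (W.constSum_s3 X).map f hf ↔
      f ∘ (κ ∘ Sum.inl) = ι' ∧ f ∘ (κ ∘ Sum.inr) = κ' ∘ W.map f hf := by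
  simp only [funext_iff]
  exact Sum.forall

end ConstSum

/-- Initial Kruskal fixed points exist. -/
theorem exists_initial_kruskalFP (W : PODilator.{u}) (hW : W.IsNormal) (X : POrd.{u}) :
    ∃ (Z : POrd.{u}) (ι : X → Z) (κ : W.obj Z → Z), IsInitialKFP W X Z ι κ := by
  obtain ⟨Z, κ, hκ, initial⟩ := exists_initial_kruskalAlg (hW.constSum_s3 X)
  refine ⟨Z, κ ∘ Sum.inl, κ ∘ Sum.inr, hκ.isKruskalFP, fun Z' ι' κ' h => ?_⟩
  exact (existsUnique_congr fun f => exists_congr comp_eq_sumElim_comp_map_iff).1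
    (initial Z' (Sum.elim ι' κ') h.reflectsKruskal)
end
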